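/- Let β ∈ E_∞ with coding (s_k), i.e. s_1 ∈ F_e, s_k ∈ F for k ≥ 2, and β ∈ J^{s_1•…•s_k} for every k ≥ 1. Then τ(β) = lim_{n→∞} (s_1•…•s_n 0^∞)_β. -/

import Mathlib

open Set Filter MeasureTheory Topology

noncomputable section

/-- The β-transformation `x ↦ βx - ⌊βx⌋`. -/
def Tbeta (β x : ℝ) : ℝ := Int.fract (β * x)

/-- The survivor set `K_β(t)`: points of `[0,1)` whose orbit never enters `[0,t)`. -/
def survivor (β t : ℝ) : Set ℝ :=
  {x | x ∈ Set.Ico (0 : ℝ) 1 ∧ ∀ n : ℕ, t ≤ (Tbeta β)^[n] x}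

/-- The set-valued bifurcation set `E_β`. -/
def Ebif (β : ℝ) : Set ℝ :=
  {t | t ∈ Set.Ico (0 : ℝ) 1 ∧ ∀ t' : ℝ, t < t' → survivor β t' ≠ survivor β t}

/-- `(c)_β = Σ_{i≥1} c_i β^{-i}` for an infinite digit sequence (indexed from `0`). -/
def valSeq (β : ℝ) (c : ℕ → ℕ) : ℝ := ∑' i : ℕ, (c i : ℝ) / β ^ (i + 1)

/-- `(w 0^∞)_β` for a finite word `w`. -/
def valWord (β : ℝ) (w : List ℕ) : ℝ :=
  ∑ i ∈ Finset.range w.length, (w.getD i 0 : ℝ) / β ^ (i + 1)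

/-- `w⁺`: increment the last letter of `w`. -/
def wplus (w : List ℕ) : List ℕ := w.dropLast ++ [w.getLast! + 1]

/-- `w⁻`: decrement the last letter of `w`. -/
def wminus (w : List ℕ) : List ℕ := w.dropLast ++ [w.getLast! - 1]

/-- `θ`: increment every digit of `w` by one. -/
def theta (w : List ℕ) : List ℕ := w.map (· + 1)

/-- `L(w)`: the lexicographically largest cyclic permutation of `w`. -/
def maxCyc (w : List ℕ) : List ℕ := ((List.range w.length).map w.rotate).foldl max []

/-- `w^∞`: the periodic sequence with period block `w`. -/
def perSeq (w : List ℕ) : ℕ → ℕ := fun i => w.getD (i % w.length) 0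

/-- The sequence given by the word `w` followed by the sequence `c`. -/
def wordSeq (w : List ℕ) (c : ℕ → ℕ) : ℕ → ℕ :=
  fun i => if i < w.length then w.getD i 0 else c (i - w.length)

/-- Strict lexicographic order `≺` on sequences. -/
def seqLt (x y : ℕ → ℕ) : Prop := ∃ n, (∀ i < n, x i = y i) ∧ x n < y n

/-- Lexicographic order `≼` on sequences. -/
def seqLe (x y : ℕ → ℕ) : Prop := x = y ∨ seqLt x y

/-- The `n`-fold left shift `σⁿ` on sequences. -/
def shiftn (n : ℕ) (x : ℕ → ℕ) : ℕ → ℕ := fun i => x (i + n)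

/-- One step of the Farey recursion: insert the concatenation `w_i w_{i+1}`
between consecutive entries. -/
def fareyInsert : List (List ℕ) → List (List ℕ)
  | [] => []
  | [w] => [w]
  | w :: v :: rest => w :: (w ++ v) :: fareyInsert (v :: rest)

/-- The ordered set `F_n` of Farey words of level `n`. -/
def fareyLevel : ℕ → List (List ℕ)
  | 0 => [[0], [1]]
  | n + 1 => fareyInsert (fareyLevel n)

/-- `F`: all Farey words of length at least two. -/
def FareySet : Set (List ℕ) := {w | (∃ n, w ∈ fareyLevel n) ∧ w ≠ [0] ∧ w ≠ [1]}

/-- `F̂ = F ∪ {1}`. -/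
def FareyHat : Set (List ℕ) := FareySet ∪ {[1]}

/-- The extended Farey set `F_e = {θ^k(w) : w ∈ F̂, k ≥ 0}`. -/
def FareyExt : Set (List ℕ) := {w | ∃ v ∈ FareyHat, ∃ k : ℕ, w = theta^[k] v}

/-- A nonempty word is Lyndon iff it is strictly smaller than each of its nontrivial
cyclic rotations (equivalently: aperiodic and lexicographically smallest among its
cyclic permutations). -/
def IsLyndon (w : List ℕ) : Prop := w ≠ [] ∧ ∀ i, 0 < i → i < w.length → w < w.rotate i

/-- `L_e`: all Lyndon words over `ℕ ∪ {0}` except the single-letter word `0`. -/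
def LyndonExt : Set (List ℕ) := {w | IsLyndon w ∧ w ≠ [0]}

/-- `L`: Lyndon words over `{0,1}` of length at least `2`. -/
def LyndonBin : Set (List ℕ) := {w | IsLyndon w ∧ 2 ≤ w.length ∧ ∀ d ∈ w, d ≤ 1}

/-- The block of `Φ_s` emitted for current digit `d` after previous digit `p`:
`L(s)` for `00`, `s⁻` for `10`, `L(s)⁺` for `01`, `s` for `11`. -/
def phiBlock (s : List ℕ) (p d : ℕ) : List ℕ :=
  if d = 0 then (if p = 0 then maxCyc s else wminus s)
  else (if p = 0 then wplus (maxCyc s) else s)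

def phiAux (s : List ℕ) : ℕ → List ℕ → List ℕ
  | _, [] => []
  | p, d :: rest => phiBlock s p d ++ phiAux s d rest

/-- The substitution `Φ_s` on finite words; `s • r = subst s r`.  An initial digit `0`
produces `s⁻`, an initial digit `1` produces `L(s)⁺`, and thereafter runs
`0^k` resp. `1^l` produce `L(s)^{k-1}` resp. `s^{l-1}`, in accordance with
`Φ_s(0^{k₁}1^{l₁}…) = s⁻ L(s)^{k₁-1} L(s)⁺ s^{l₁-1} …` and
`Φ_s(1^{k₁}0^{l₁}…) = L(s)⁺ s^{k₁-1} s⁻ L(s)^{l₁-1} …`. -/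
def subst (s r : List ℕ) : List ℕ :=
  match r with
  | [] => []
  | d :: rest => phiBlock s (1 - d) d ++ phiAux s d rest

/-- The substitution `Φ_s` on infinite sequences, as the limit of its values
on initial segments (each digit contributes a nonempty block, so the `i`-th letter
is determined by the first `i+1` digits). -/
def phiSeq (s : List ℕ) (c : ℕ → ℕ) : ℕ → ℕ :=
  fun i => (subst s (List.ofFn fun j : Fin (i + 1) => c j)).getD i 0

/-- `Λ_e(m) = {s₁ • s₂ • … • s_m : s₁ ∈ F_e, s₂,…,s_m ∈ F}`. -/
def LambdaE (m : ℕ) : Set (List ℕ) :=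
  {w | ∃ s₁ ∈ FareyExt, ∃ rs : List (List ℕ),
    rs.length = m - 1 ∧ (∀ r ∈ rs, r ∈ FareySet) ∧ w = rs.foldl subst s₁}

/-- `Λ_e = ∪_{m≥1} Λ_e(m)`. -/
def LambdaExt : Set (List ℕ) := ⋃ m ∈ Set.Ici 1, LambdaE m

/-- `β_ℓ^S`: the base `β > 1` with `(L(S)^∞)_β = 1` (it is unique since
`β ↦ (c)_β` is strictly decreasing). -/
def betaL (S : List ℕ) : ℝ :=
  Classical.epsilon fun β : ℝ => 1 < β ∧ valSeq β (perSeq (maxCyc S)) = 1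

/-- `β_*^S`: the base `β > 1` with `(L(S)⁺ S⁻ L(S)^∞)_β = 1`. -/
def betaStar (S : List ℕ) : ℝ :=
  Classical.epsilon fun β : ℝ =>
    1 < β ∧ valSeq β (wordSeq (wplus (maxCyc S) ++ wminus S) (perSeq (maxCyc S))) = 1

/-- `β_r^S`: the base `β > 1` with `(L(S)⁺ S^∞)_β = 1`. -/
def betaR (S : List ℕ) : ℝ :=
  Classical.epsilon fun β : ℝ => 1 < β ∧ valSeq β (wordSeq (wplus (maxCyc S)) (perSeq S)) = 1

/-- The Lyndon/Farey interval `J^S = [β_ℓ^S, β_r^S]`. -/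
def Jint (S : List ℕ) : Set ℝ := Set.Icc (betaL S) (betaR S)

/-- The basic interval `I^S = [β_ℓ^S, β_*^S]`. -/
def Iint (S : List ℕ) : Set ℝ := Set.Icc (betaL S) (betaStar S)

/-- The exceptional set `E = (1,∞) ∖ ∪_{s ∈ F_e} J^s`. -/
def Eexc : Set ℝ := Set.Ioi 1 \ ⋃ s ∈ FareyExt, Jint s

/-- The relative exceptional set `E^S = (J^S ∖ I^S) ∖ ∪_{r ∈ F} J^{S•r}`. -/
def EexcRel (S : List ℕ) : Set ℝ :=
  (Jint S \ Iint S) \ ⋃ r ∈ FareySet, Jint (subst S r)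

/-- The infinitely renormalizable set `E_∞ = ∩_{m≥1} ∪_{S ∈ Λ_e(m)} J^S`. -/
def Einf : Set ℝ := ⋂ m ∈ Set.Ici 1, ⋃ S ∈ LambdaE m, Jint S

/-- `E_L = E ∪ {β_ℓ^s : s ∈ F_e}`. -/
def EL : Set ℝ := Eexc ∪ {x | ∃ s ∈ FareyExt, x = betaL s}

/-- The critical value `τ(β) = min{t > 0 : dim_H K_β(t) = 0}`. -/
def tau (β : ℝ) : ℝ := sInf {t : ℝ | 0 < t ∧ dimH (survivor β t) = 0}

end

/-! Write `S = s₁ • … • sₙ`, a Lyndon word.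

*Upper bound.* For `β ∈ J^S` and `t = (S 0^∞)_β`, the greedy expansion of a point of `K_β(t)` has
all its shifts between `S^∞` and `L(S)⁺ S^∞`. Either it ends in `S^∞`, or all its shifts lie between
`S^∞` and `L(S)^∞`. The latter forces eventual periodicity, by induction on `n`: a sequence confined
in this way by `S • r` is confined by `S`, or has a tail `Φ_S(c)` with a tail of `c` confined by
`r`; and confinement by a single Farey word forces eventual periodicity because the rotations of a
Farey word are mechanical sequences. So `K_β(t)` is countable, and `τ(β) ≤ (S 0^∞)_β`.

*Lower bound.* Since `β ∈ J^{S • r}` with `r = sₙ₊₁`, the images under `Φ_S` of the binary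
sequences whose ones are far apart are greedy expansions in base `β`. They form a Cantor set,
separated at an exponential rate, inside `K_β(t)` for `t = (S⁻ 0^∞)_β`. Hence
`(S 0^∞)_β - β^{-|S|} ≤ τ(β)`, and `|S| ≥ n` closes the squeeze.
-/

/-! ### Lexicographic order and prefixes of sequences -/

theorem shiftn_apply (n : ℕ) (x : ℕ → ℕ) (i : ℕ) : shiftn n x i = x (i + n) := rfl

@[simp] theorem shiftn_apply_zero (n : ℕ) (x : ℕ → ℕ) : shiftn n x 0 = x n :=
  congrArg x (zero_add n)

@[simp] theorem shiftn_zero (x : ℕ → ℕ) : shiftn 0 x = x := rfl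

theorem shiftn_shiftn (m n : ℕ) (x : ℕ → ℕ) : shiftn m (shiftn n x) = shiftn (n + m) x := by
  funext i
  exact congrArg x (by omega)

theorem shiftn_mul_of_periodic {N : ℕ} {a : ℕ → ℕ} (ha : Function.Periodic a N) (q : ℕ) :
    shiftn (q * N) a = a :=
  funext (ha.nat_mul q)

theorem shiftn_of_periodic {N : ℕ} {a : ℕ → ℕ} (ha : Function.Periodic a N) :
    shiftn N a = a :=
  funext ha

theorem eq_of_shiftn_one_eq {c c' : ℕ → ℕ} (h0 : c 0 = c' 0) (h : shiftn 1 c = shiftn 1 c') :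
    c = c' := by
  funext i
  rcases i with _ | i
  exacts [h0, congrFun h i]

/-- The prefix of length `N` of a sequence, in the lexicographic order. -/
def takeSeq (N : ℕ) (x : ℕ → ℕ) : Lex (Fin N → ℕ) := toLex fun i => x i

theorem takeSeq_eq_iff {N : ℕ} {x y : ℕ → ℕ} :
    takeSeq N x = takeSeq N y ↔ ∀ i < N, x i = y i := by
  rw [takeSeq, takeSeq, toLex_inj, funext_iff, Fin.forall_iff]

theorem takeSeq_lt_iff {N : ℕ} {x y : ℕ → ℕ} :
    takeSeq N x < takeSeq N y ↔ ∃ k < N, (∀ i < k, x i = y i) ∧ x k < y k := by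
  constructor
  · rintro ⟨k, hk, hlt⟩
    exact ⟨k, k.2, fun i hi => hk ⟨i, hi.trans k.2⟩ hi, hlt⟩
  · rintro ⟨k, hkN, hk, hlt⟩
    exact ⟨⟨k, hkN⟩, fun i hi => hk i hi, hlt⟩

theorem takeSeq_lt_of_le_length {M N : ℕ} (hMN : M ≤ N) {x y : ℕ → ℕ}
    (h : takeSeq M x < takeSeq M y) : takeSeq N x < takeSeq N y := by
  obtain ⟨k, hk, h⟩ := takeSeq_lt_iff.mp h
  exact takeSeq_lt_iff.mpr ⟨k, hk.trans_le hMN, h⟩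

theorem lt_of_takeSeq_lt {N : ℕ} {x y : ℕ → ℕ} (h : takeSeq N x < takeSeq N y) :
    toLex x < toLex y := by
  obtain ⟨k, -, h⟩ := takeSeq_lt_iff.mp h
  exact ⟨k, h⟩

theorem takeSeq_le_of_le {x y : ℕ → ℕ} (h : toLex x ≤ toLex y) (N : ℕ) :
    takeSeq N x ≤ takeSeq N y :=
  not_lt.mp fun hlt => (lt_of_takeSeq_lt hlt).not_ge h

theorem shiftn_lt_shiftn_iff {n : ℕ} {x y : ℕ → ℕ} (h : takeSeq n x = takeSeq n y) :
    toLex (shiftn n x) < toLex (shiftn n y) ↔ toLex x < toLex y := by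
  rw [takeSeq_eq_iff] at h
  constructor
  · rintro ⟨k, hk, hlt⟩
    refine ⟨k + n, fun i hi => ?_, hlt⟩
    rcases lt_or_ge i n with hin | hin
    · exact h i hin
    · obtain ⟨j, rfl⟩ := Nat.exists_eq_add_of_le' hin
      exact hk j (Nat.lt_of_add_lt_add_right hi)
  · rintro ⟨k, hk, hlt⟩
    have hkn : n ≤ k := not_lt.mp fun hkn => hlt.ne (h k hkn)
    obtain ⟨j, rfl⟩ := Nat.exists_eq_add_of_le' hkn
    exact ⟨j, fun i hi => hk (i + n) (Nat.add_lt_add_right hi n), hlt⟩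

theorem takeSeq_le_of_split {m n N : ℕ} (hN : m + n = N) {x y : ℕ → ℕ}
    (h : takeSeq m x ≤ takeSeq m y) (h' : takeSeq n (shiftn m x) ≤ takeSeq n (shiftn m y)) :
    takeSeq N x ≤ takeSeq N y := by
  rcases h.lt_or_eq with hlt | heq
  · exact (takeSeq_lt_of_le_length (by omega) hlt).le
  refine not_lt.mp fun hlt => h'.not_gt ?_
  obtain ⟨k, hk, hagree, hlt⟩ := takeSeq_lt_iff.mp hlt
  have hmk : m ≤ k := not_lt.mp fun hkm => hlt.ne (takeSeq_eq_iff.mp heq k hkm).symm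
  obtain ⟨j, rfl⟩ := Nat.exists_eq_add_of_le' hmk
  exact takeSeq_lt_iff.mpr ⟨j, by omega, fun i hi => hagree (i + m) (by omega), hlt⟩

theorem takeSeq_covBy {N : ℕ} (hN : 0 < N) {x y : ℕ → ℕ}
    (h : ∀ i, i + 1 < N → x i = y i) (hlast : y (N - 1) = x (N - 1) + 1) :
    takeSeq N x ⋖ takeSeq N y := by
  refine ⟨takeSeq_lt_iff.mpr ⟨N - 1, by omega, fun i hi => h i (by omega), by omega⟩, ?_⟩
  rintro z ⟨j, hj, hjlt⟩ ⟨k, hk, hklt⟩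
  change ∀ i < j, x i = ofLex z i at hj
  change ∀ i < k, ofLex z i = y i at hk
  change x j < ofLex z j at hjlt
  change ofLex z k < y k at hklt
  rcases lt_trichotomy j k with hjk | rfl | hkj
  · have := hk j hjk
    have := h j (by omega)
    omega
  · rcases (show (j : ℕ) + 1 < N ∨ (j : ℕ) = N - 1 by omega) with hjN | hjN
    · have := h j hjN
      omega
    · rw [hjN] at hjlt hklt
      omega
  · have := hj k hkj
    have := h k (by omega)
    omega

theorem first_difference_mod_of_periodic {N k : ℕ} {a x : ℕ → ℕ} (ha : Function.Periodic a N)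
    (hagree : ∀ i < k, a i = x i) :
    (∀ i < k % N, a i = shiftn (k / N * N) x i) ∧ a (k % N) = a k := by
  have hk := Nat.div_add_mod' k N
  refine ⟨fun i hi => ?_, ha.map_mod_nat k⟩
  rw [← ha.nat_mul (k / N) i]
  exact hagree _ (show i + k / N * N < k by omega)

theorem le_of_forall_takeSeq_le_shiftn {N : ℕ} (hN : 0 < N) {a x : ℕ → ℕ}
    (ha : Function.Periodic a N) (h : ∀ q, takeSeq N a ≤ takeSeq N (shiftn (q * N) x)) :
    toLex a ≤ toLex x := by
  refine not_lt.mp fun ⟨k, hagree, (hlt : x k < a k)⟩ => (h (k / N)).not_gt ?_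
  obtain ⟨hagree', hmod⟩ := first_difference_mod_of_periodic ha fun i hi => (hagree i hi).symm
  refine takeSeq_lt_iff.mpr ⟨k % N, Nat.mod_lt _ hN, fun i hi => (hagree' i hi).symm, ?_⟩
  rwa [hmod, shiftn_apply, Nat.mod_add_div']

theorem le_of_forall_takeSeq_shiftn_le {N : ℕ} (hN : 0 < N) {b x : ℕ → ℕ}
    (hb : Function.Periodic b N) (h : ∀ q, takeSeq N (shiftn (q * N) x) ≤ takeSeq N b) :
    toLex x ≤ toLex b := by
  refine not_lt.mp fun ⟨k, hagree, (hlt : b k < x k)⟩ => (h (k / N)).not_gt ?_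
  obtain ⟨hagree', hmod⟩ := first_difference_mod_of_periodic hb hagree
  refine takeSeq_lt_iff.mpr ⟨k % N, Nat.mod_lt _ hN, hagree', ?_⟩
  rwa [hmod, shiftn_apply, Nat.mod_add_div']

/-! ### Eventually periodic sequences -/

/-- Eventual periodicity of a sequence. -/
def EvPer (d : ℕ → ℕ) : Prop := ∃ i p, 0 < p ∧ ∀ n, i ≤ n → d (n + p) = d n

theorem EvPer.of_shiftn {d : ℕ → ℕ} {m : ℕ} (h : EvPer (shiftn m d)) : EvPer d := by
  obtain ⟨i, p, hp, h⟩ := h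
  refine ⟨i + m, p, hp, fun n hn => ?_⟩
  obtain ⟨k, rfl⟩ := Nat.exists_eq_add_of_le' (show m ≤ n by omega)
  rw [add_right_comm]
  exact h k (by omega)

theorem evPer_of_periodic {d : ℕ → ℕ} {N : ℕ} (hN : 0 < N) (h : Function.Periodic d N) :
    EvPer d :=
  ⟨0, N, hN, fun n _ => h n⟩

theorem countable_evPer : {d : ℕ → ℕ | EvPer d}.Countable := by
  have hcover : {d : ℕ → ℕ | EvPer d} ⊆
      ⋃ (i : ℕ) (p : ℕ), {d | 0 < p ∧ ∀ n, i ≤ n → d (n + p) = d n} :=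
    fun d hd => mem_iUnion₂.mpr hd
  refine (countable_iUnion fun i => countable_iUnion fun p => ?_).mono hcover
  refine countable_of_injective_of_countable_image (f := fun d (j : Fin (i + p)) => d j) ?_
    (to_countable _)
  rintro d ⟨hp, hd⟩ e ⟨-, he⟩ hde
  funext n
  induction n using Nat.strong_induction_on with
  | _ n ih =>
    rcases lt_or_ge n (i + p) with hn | hn
    · exact congrFun hde ⟨n, hn⟩
    · obtain ⟨k, rfl⟩ := Nat.exists_eq_add_of_le' (show p ≤ n by omega)
      rw [hd k (by omega), he k (by omega), ih k (by omega)]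

/-! ### Lyndon words and their largest rotations as periodic sequences -/

/-- `a` is the periodic sequence of a Lyndon word of length `N` with nonzero last letter, and `b`
is the periodic sequence of the largest cyclic permutation of that word. -/
structure LyndonPair (N : ℕ) (a b : ℕ → ℕ) : Prop where
  pos : 0 < N
  per : Function.Periodic a N
  rot : ∃ j, b = shiftn j a
  last : 1 ≤ a (N - 1)
  min : ∀ i, 0 < i → i < N → toLex a < toLex (shiftn i a)
  max : ∀ i, toLex (shiftn i a) ≤ toLex b

namespace LyndonPair

variable {N : ℕ} {a b : ℕ → ℕ}

theorem le (h : LyndonPair N a b) : toLex a ≤ toLex b := h.max 0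

theorem per_right (h : LyndonPair N a b) : Function.Periodic b N := by
  obtain ⟨j, rfl⟩ := h.rot
  exact fun k => (congrArg a (add_right_comm k N j)).trans (h.per (k + j))

theorem le_shiftn (h : LyndonPair N a b) (i : ℕ) : toLex a ≤ toLex (shiftn i a) := by
  have hmod : shiftn (i % N) a = shiftn i a := by
    conv_rhs => rw [← Nat.div_add_mod' i N]
    rw [← shiftn_shiftn, shiftn_mul_of_periodic h.per]
  rw [← hmod]
  rcases Nat.eq_zero_or_pos (i % N) with h0 | h0
  · rw [h0, shiftn_zero]
  · exact (h.min _ h0 (Nat.mod_lt _ h.pos)).le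

theorem shiftn_right_le (h : LyndonPair N a b) (i : ℕ) : toLex (shiftn i b) ≤ toLex b := by
  obtain ⟨j, hj⟩ := h.rot
  rw [hj, shiftn_shiftn, ← hj]
  exact h.max _

theorem le_shiftn_right (h : LyndonPair N a b) (i : ℕ) : toLex a ≤ toLex (shiftn i b) := by
  obtain ⟨j, hj⟩ := h.rot
  rw [hj, shiftn_shiftn]
  exact h.le_shiftn _

theorem eq_shiftn_right (h : LyndonPair N a b) : ∃ j, a = shiftn j b := by
  obtain ⟨j, hj⟩ := h.rot
  refine ⟨j * N - j, ?_⟩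
  have hle : j ≤ j * N := Nat.le_mul_of_pos_right _ h.pos
  rw [hj, shiftn_shiftn, Nat.add_sub_cancel' hle, shiftn_mul_of_periodic h.per]

theorem shiftn_right_lt (h : LyndonPair N a b) {i : ℕ} (hi : 0 < i) (hiN : i < N) :
    toLex (shiftn i b) < toLex b := by
  refine lt_of_le_of_ne (h.shiftn_right_le i) fun heq => (h.min i hi hiN).ne ?_
  obtain ⟨j, hj⟩ := h.eq_shiftn_right
  rw [hj, shiftn_shiftn, add_comm, ← shiftn_shiftn, toLex_inj.mp heq]

theorem takeSeq_lt_suffix (h : LyndonPair N a b) {k : ℕ} (hk : 0 < k) (hkN : k < N) :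
    takeSeq (N - k) a < takeSeq (N - k) (shiftn k a) := by
  have hlt := h.min k hk hkN
  refine lt_of_le_of_ne (takeSeq_le_of_le hlt.le _) fun heq => ?_
  rw [← shiftn_lt_shiftn_iff heq, shiftn_shiftn, Nat.add_sub_cancel' hkN.le,
    shiftn_of_periodic h.per] at hlt
  exact hlt.not_ge (h.le_shiftn _)

theorem suffix_takeSeq_lt (h : LyndonPair N a b) {k : ℕ} (hk : 0 < k) (hkN : k < N) :
    takeSeq (N - k) (shiftn k b) < takeSeq (N - k) b := by
  have hlt := h.shiftn_right_lt hk hkN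
  refine lt_of_le_of_ne (takeSeq_le_of_le hlt.le _) fun heq => ?_
  rw [← shiftn_lt_shiftn_iff heq, shiftn_shiftn, Nat.add_sub_cancel' hkN.le,
    shiftn_of_periodic h.per_right] at hlt
  exact hlt.not_ge (h.shiftn_right_le _)

end LyndonPair

/-! ### The substitution on sequences -/

/-- The `k`-th letter of the block of the substitution `Φ_s` emitted for the digit `d` after the
digit `p`, where `a = s^∞`, `b = L(s)^∞` and `N` is the length of `s`. -/
def substDigit (N : ℕ) (a b : ℕ → ℕ) (p d k : ℕ) : ℕ :=
  if d = 0 then (if p = 0 then b k else if k + 1 = N then a k - 1 else a k)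
  else (if p = 0 then (if k + 1 = N then b k + 1 else b k) else a k)

/-- The substitution `Φ_s` on sequences, encoded so that it commutes with shifts: the digit `c 0`
emits no block and only serves as the predecessor of `c 1`. -/
def substSeq (N : ℕ) (a b : ℕ → ℕ) (c : ℕ → ℕ) (n : ℕ) : ℕ :=
  substDigit N a b (c (n / N)) (c (n / N + 1)) (n % N)

/-- The sequence `p d d d …`. -/
def headSeq (p d : ℕ) : ℕ → ℕ := fun i => if i = 0 then p else d

@[simp] theorem headSeq_zero (p d : ℕ) : headSeq p d 0 = p := rfl

@[simp] theorem headSeq_one (p d : ℕ) : headSeq p d 1 = d := rfl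

@[simp] theorem shiftn_one_headSeq (p d : ℕ) : shiftn 1 (headSeq p d) = fun _ => d := rfl

section substSeq

variable {N : ℕ} {a b c c' : ℕ → ℕ}

theorem substSeq_mul_add (c : ℕ → ℕ) (q : ℕ) {k : ℕ} (hk : k < N) :
    substSeq N a b c (q * N + k) = substDigit N a b (c q) (c (q + 1)) k := by
  have hdiv : (q * N + k) / N = q := Nat.div_eq_of_lt_le (by omega) (by rw [add_mul]; omega)
  rw [substSeq, hdiv, Nat.mul_add_mod_of_lt hk]

theorem substSeq_of_lt (c : ℕ → ℕ) {k : ℕ} (hk : k < N) :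
    substSeq N a b c k = substDigit N a b (c 0) (c 1) k := by
  simpa using substSeq_mul_add (a := a) (b := b) c 0 hk

theorem shiftn_mul_substSeq (hN : 0 < N) (c : ℕ → ℕ) (q : ℕ) :
    shiftn (q * N) (substSeq N a b c) = substSeq N a b (shiftn q c) := by
  funext n
  simp only [shiftn_apply, substSeq, Nat.add_mul_div_right n q hN, Nat.add_mul_mod_self_right,
    add_right_comm]

theorem shiftn_substSeq (hN : 0 < N) (c : ℕ → ℕ) :
    shiftn N (substSeq N a b c) = substSeq N a b (shiftn 1 c) := by
  simpa using shiftn_mul_substSeq (a := a) (b := b) hN c 1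

theorem EvPer.substSeq (hN : 0 < N) (h : EvPer c) : EvPer (substSeq N a b c) := by
  obtain ⟨i, p, hp, h⟩ := h
  refine ⟨i * N, p * N, Nat.mul_pos hp hN, fun n hn => ?_⟩
  have hi : i ≤ n / N := (Nat.le_div_iff_mul_le hN).mpr hn
  simp only [_root_.substSeq, Nat.add_mul_div_right n p hN, Nat.add_mul_mod_self_right, h _ hi]
  rw [add_right_comm, h _ (by omega)]

theorem substSeq_const_one (h : LyndonPair N a b) : substSeq N a b (fun _ => 1) = a := by
  funext n
  simp [substSeq, substDigit, h.per.map_mod_nat]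

theorem substSeq_const_zero (h : LyndonPair N a b) : substSeq N a b (fun _ => 0) = b := by
  funext n
  simp [substSeq, substDigit, h.per_right.map_mod_nat]

theorem substDigit_zero_one_of_lt {p k : ℕ} (hk : k + 1 < N) :
    substDigit N a b p 0 k = substDigit N a b p 1 k := by
  simp only [substDigit, hk.ne, if_true, if_false, one_ne_zero]

theorem substDigit_one_last (h : LyndonPair N a b) (p : ℕ) :
    substDigit N a b p 1 (N - 1) = substDigit N a b p 0 (N - 1) + 1 := by
  simp only [substDigit, if_true, if_false, one_ne_zero, Nat.sub_add_cancel h.pos]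
  split_ifs
  exacts [rfl, (Nat.sub_add_cancel h.last).symm]

theorem takeSeq_shiftn_substSeq_congr (k : ℕ) (h0 : c 0 = c' 0) (h1 : c 1 = c' 1) :
    takeSeq (N - k) (shiftn k (substSeq N a b c)) =
      takeSeq (N - k) (shiftn k (substSeq N a b c')) := by
  refine takeSeq_eq_iff.mpr fun i hi => ?_
  rw [shiftn_apply, shiftn_apply, substSeq_of_lt c (by omega), substSeq_of_lt c' (by omega),
    h0, h1]

theorem takeSeq_shiftn_substSeq_covBy (h : LyndonPair N a b) {k : ℕ} (hk : k < N)
    (h0 : c 0 = c' 0) (h1 : c 1 = 0) (h1' : c' 1 = 1) :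
    takeSeq (N - k) (shiftn k (substSeq N a b c)) ⋖
      takeSeq (N - k) (shiftn k (substSeq N a b c')) := by
  refine takeSeq_covBy (by omega) (fun i hi => ?_) ?_ <;>
    rw [shiftn_apply, shiftn_apply, substSeq_of_lt c (by omega), substSeq_of_lt c' (by omega),
      h0, h1, h1']
  · exact substDigit_zero_one_of_lt (by omega)
  · rw [show N - k - 1 + k = N - 1 by omega]
    exact substDigit_one_last h _

theorem substSeq_first_difference (h : LyndonPair N a b) {k : ℕ} (heq : ∀ i ≤ k, c i = c' i)
    (hc : c (k + 1) = 0) (hc' : c' (k + 1) = 1) :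
    (∀ i < k * N + (N - 1), substSeq N a b c i = substSeq N a b c' i) ∧
      substSeq N a b c' (k * N + (N - 1)) = substSeq N a b c (k * N + (N - 1)) + 1 := by
  have hN := h.pos
  refine ⟨fun i hi => ?_, ?_⟩
  · have hi' := Nat.div_add_mod' i N
    have hm := Nat.mod_lt i hN
    rcases lt_trichotomy (i / N) k with hlt | hdiv | hgt
    · rw [substSeq, substSeq, heq _ hlt.le, heq _ hlt]
    · rw [substSeq, substSeq, hdiv, hc, hc', heq k le_rfl]
      rw [hdiv] at hi'
      exact substDigit_zero_one_of_lt (by omega)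
    · have := Nat.mul_le_mul_right N hgt
      rw [Nat.succ_mul] at this
      omega
  · rw [substSeq_mul_add c k (by omega), substSeq_mul_add c' k (by omega), hc, hc', heq k le_rfl]
    exact substDigit_one_last h _

theorem substSeq_lt (h : LyndonPair N a b) (h0 : c 0 = c' 0) (hc' : ∀ i, c' i ≤ 1)
    (hlt : toLex (shiftn 1 c) < toLex (shiftn 1 c')) :
    toLex (substSeq N a b c) < toLex (substSeq N a b c') := by
  obtain ⟨k, hk, hlt⟩ := hlt
  have hlt' : c (k + 1) < c' (k + 1) := hlt
  have heq : ∀ i ≤ k, c i = c' i := by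
    rintro (_ | i) hi
    exacts [h0, hk i hi]
  have hck := hc' (k + 1)
  obtain ⟨hagree, hlast⟩ :=
    substSeq_first_difference h heq (show c (k + 1) = 0 by omega) (show c' (k + 1) = 1 by omega)
  exact ⟨k * N + (N - 1), hagree, (Nat.lt_succ_self _).trans_eq hlast.symm⟩

theorem substSeq_le (h : LyndonPair N a b) (h0 : c 0 = c' 0) (hc' : ∀ i, c' i ≤ 1)
    (hle : toLex (shiftn 1 c) ≤ toLex (shiftn 1 c')) :
    toLex (substSeq N a b c) ≤ toLex (substSeq N a b c') := by
  rcases hle.lt_or_eq with hlt | heq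
  · exact (substSeq_lt h h0 hc' hlt).le
  · rw [eq_of_shiftn_one_eq h0 (toLex_inj.mp heq)]

end substSeq

section windows

variable {N : ℕ} {a b c : ℕ → ℕ}

theorem takeSeq_substSeq_of_zero {k : ℕ} (hk : k < N) (h0 : c 0 = 0) :
    takeSeq k (substSeq N a b c) = takeSeq k b := by
  refine takeSeq_eq_iff.mpr fun i hi => ?_
  have hi' : i + 1 ≠ N := by omega
  rw [substSeq_of_lt c (by omega)]
  simp only [substDigit, h0, hi', if_true, if_false, ite_self]

theorem takeSeq_substSeq_of_one {k : ℕ} (hk : k < N) (h0 : c 0 = 1) :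
    takeSeq k (substSeq N a b c) = takeSeq k a := by
  refine takeSeq_eq_iff.mpr fun i hi => ?_
  have hi' : i + 1 ≠ N := by omega
  rw [substSeq_of_lt c (by omega)]
  simp only [substDigit, h0, hi', one_ne_zero, if_false, ite_self]

theorem substSeq_suffix_covBy (h : LyndonPair N a b) {k : ℕ} (hk : k < N) (h0 : c 0 = 1)
    (h1 : c 1 = 0) :
    takeSeq (N - k) (shiftn k (substSeq N a b c)) ⋖ takeSeq (N - k) (shiftn k a) := by
  have := takeSeq_shiftn_substSeq_covBy h hk (c := c) (c' := fun _ => 1) h0 h1 rfl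
  rwa [substSeq_const_one h] at this

theorem suffix_covBy_substSeq (h : LyndonPair N a b) {k : ℕ} (hk : k < N) (h0 : c 0 = 0)
    (h1 : c 1 = 1) :
    takeSeq (N - k) (shiftn k b) ⋖ takeSeq (N - k) (shiftn k (substSeq N a b c)) := by
  have := takeSeq_shiftn_substSeq_covBy h hk (c := fun _ => 0) (c' := c) h0.symm rfl h1
  rwa [substSeq_const_zero h] at this

theorem substSeq_suffix_eq_left (h : LyndonPair N a b) (k : ℕ) (h0 : c 0 = 1) (h1 : c 1 = 1) :
    takeSeq (N - k) (shiftn k (substSeq N a b c)) = takeSeq (N - k) (shiftn k a) := by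
  rw [takeSeq_shiftn_substSeq_congr k (c' := fun _ => 1) h0 h1, substSeq_const_one h]

theorem substSeq_suffix_eq_right (h : LyndonPair N a b) (k : ℕ) (h0 : c 0 = 0) (h1 : c 1 = 0) :
    takeSeq (N - k) (shiftn k (substSeq N a b c)) = takeSeq (N - k) (shiftn k b) := by
  rw [takeSeq_shiftn_substSeq_congr k (c' := fun _ => 0) h0 h1, substSeq_const_zero h]

theorem takeSeq_substSeq_covBy (h : LyndonPair N a b) (h0 : c 0 = 1) (h1 : c 1 = 0) :
    takeSeq N (substSeq N a b c) ⋖ takeSeq N a :=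
  substSeq_suffix_covBy h h.pos h0 h1

theorem takeSeq_covBy_substSeq (h : LyndonPair N a b) (h0 : c 0 = 0) (h1 : c 1 = 1) :
    takeSeq N b ⋖ takeSeq N (substSeq N a b c) :=
  suffix_covBy_substSeq h h.pos h0 h1

theorem takeSeq_substSeq_eq_left (h : LyndonPair N a b) (h0 : c 0 = 1) (h1 : c 1 = 1) :
    takeSeq N (substSeq N a b c) = takeSeq N a :=
  substSeq_suffix_eq_left h 0 h0 h1

theorem takeSeq_substSeq_eq_right (h : LyndonPair N a b) (h0 : c 0 = 0) (h1 : c 1 = 0) :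
    takeSeq N (substSeq N a b c) = takeSeq N b :=
  substSeq_suffix_eq_right h 0 h0 h1

theorem takeSeq_left_le_substSeq (h : LyndonPair N a b) (h0 : c 0 = 0) (h1 : c 1 ≤ 1) :
    takeSeq N a ≤ takeSeq N (substSeq N a b c) := by
  refine (takeSeq_le_of_le h.le N).trans ?_
  rcases Nat.le_one_iff_eq_zero_or_eq_one.mp h1 with h1 | h1
  · exact (takeSeq_substSeq_eq_right h h0 h1).ge
  · exact (takeSeq_covBy_substSeq h h0 h1).le

theorem takeSeq_substSeq_le_right (h : LyndonPair N a b) (h0 : c 0 = 1) (h1 : c 1 ≤ 1) :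
    takeSeq N (substSeq N a b c) ≤ takeSeq N b := by
  refine le_trans ?_ (takeSeq_le_of_le h.le N)
  rcases Nat.le_one_iff_eq_zero_or_eq_one.mp h1 with h1 | h1
  · exact (takeSeq_substSeq_covBy h h0 h1).le
  · exact (takeSeq_substSeq_eq_left h h0 h1).le

theorem takeSeq_left_le_substSeq_window (h : LyndonPair N a b) {k : ℕ} (hk : 0 < k)
    (hkN : k < N) (hc : ∀ i, c i ≤ 1) :
    takeSeq N a ≤ takeSeq N (shiftn k (substSeq N a b c)) := by
  have hsuffix := h.takeSeq_lt_suffix hk hkN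
  have hsplit : shiftn (N - k) (shiftn k (substSeq N a b c)) = substSeq N a b (shiftn 1 c) := by
    rw [shiftn_shiftn, Nat.add_sub_cancel' hkN.le, shiftn_substSeq h.pos]
  rcases Nat.le_one_iff_eq_zero_or_eq_one.mp (hc 1) with h1 | h1
  · have hfirst : takeSeq (N - k) a ≤ takeSeq (N - k) (shiftn k (substSeq N a b c)) := by
      rcases Nat.le_one_iff_eq_zero_or_eq_one.mp (hc 0) with h0 | h0
      · rw [substSeq_suffix_eq_right h k h0 h1]
        exact takeSeq_le_of_le (h.le_shiftn_right k) _
      · exact (substSeq_suffix_covBy h hkN h0 h1).le_of_lt hsuffix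
    have hsecond : takeSeq k (shiftn (N - k) a) ≤
        takeSeq k (shiftn (N - k) (shiftn k (substSeq N a b c))) := by
      rw [hsplit, takeSeq_substSeq_of_zero hkN (by simpa using h1)]
      exact takeSeq_le_of_le (h.max _) _
    exact takeSeq_le_of_split (Nat.sub_add_cancel hkN.le) hfirst hsecond
  · have hfirst : takeSeq (N - k) a < takeSeq (N - k) (shiftn k (substSeq N a b c)) := by
      rcases Nat.le_one_iff_eq_zero_or_eq_one.mp (hc 0) with h0 | h0
      · exact (takeSeq_le_of_le (h.le_shiftn_right k) _).trans_lt
          (suffix_covBy_substSeq h hkN h0 h1).lt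
      · rwa [substSeq_suffix_eq_left h k h0 h1]
    exact (takeSeq_lt_of_le_length (Nat.sub_le N k) hfirst).le

theorem takeSeq_substSeq_window_le_right (h : LyndonPair N a b) {k : ℕ} (hk : 0 < k)
    (hkN : k < N) (hc : ∀ i, c i ≤ 1) :
    takeSeq N (shiftn k (substSeq N a b c)) ≤ takeSeq N b := by
  have hsuffix := h.suffix_takeSeq_lt hk hkN
  have hsplit : shiftn (N - k) (shiftn k (substSeq N a b c)) = substSeq N a b (shiftn 1 c) := by
    rw [shiftn_shiftn, Nat.add_sub_cancel' hkN.le, shiftn_substSeq h.pos]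
  rcases Nat.le_one_iff_eq_zero_or_eq_one.mp (hc 1) with h1 | h1
  · have hfirst : takeSeq (N - k) (shiftn k (substSeq N a b c)) < takeSeq (N - k) b := by
      rcases Nat.le_one_iff_eq_zero_or_eq_one.mp (hc 0) with h0 | h0
      · rwa [substSeq_suffix_eq_right h k h0 h1]
      · exact (substSeq_suffix_covBy h hkN h0 h1).lt.trans_le (takeSeq_le_of_le (h.max k) _)
    exact (takeSeq_lt_of_le_length (Nat.sub_le N k) hfirst).le
  · have hfirst : takeSeq (N - k) (shiftn k (substSeq N a b c)) ≤ takeSeq (N - k) b := by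
      rcases Nat.le_one_iff_eq_zero_or_eq_one.mp (hc 0) with h0 | h0
      · exact (suffix_covBy_substSeq h hkN h0 h1).ge_of_gt hsuffix
      · rw [substSeq_suffix_eq_left h k h0 h1]
        exact takeSeq_le_of_le (h.max k) _
    have hsecond : takeSeq k (shiftn (N - k) (shiftn k (substSeq N a b c))) ≤
        takeSeq k (shiftn (N - k) b) := by
      rw [hsplit, takeSeq_substSeq_of_one hkN (by simpa using h1)]
      exact takeSeq_le_of_le (h.le_shiftn_right _) _
    exact takeSeq_le_of_split (Nat.sub_add_cancel hkN.le) hfirst hsecond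

theorem takeSeq_left_le_shiftn_substSeq (h : LyndonPair N a b) (hc : ∀ i, c i ≤ 1) {n : ℕ}
    (hn : n % N ≠ 0 ∨ c (n / N) = 0) :
    takeSeq N a ≤ takeSeq N (shiftn n (substSeq N a b c)) := by
  rw [← Nat.div_add_mod' n N, ← shiftn_shiftn, shiftn_mul_substSeq h.pos]
  by_cases h0 : n % N = 0
  · rw [h0, shiftn_zero]
    exact takeSeq_left_le_substSeq h (by simpa using hn.resolve_left (not_not.mpr h0)) (hc _)
  · exact takeSeq_left_le_substSeq_window h (Nat.pos_of_ne_zero h0) (Nat.mod_lt _ h.pos)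
      fun i => hc _

theorem takeSeq_shiftn_substSeq_le_right (h : LyndonPair N a b) (hc : ∀ i, c i ≤ 1) {n : ℕ}
    (hn : n % N ≠ 0 ∨ c (n / N) = 1) :
    takeSeq N (shiftn n (substSeq N a b c)) ≤ takeSeq N b := by
  rw [← Nat.div_add_mod' n N, ← shiftn_shiftn, shiftn_mul_substSeq h.pos]
  by_cases h0 : n % N = 0
  · rw [h0, shiftn_zero]
    exact takeSeq_substSeq_le_right h (by simpa using hn.resolve_left (not_not.mpr h0)) (hc _)
  · exact takeSeq_substSeq_window_le_right h (Nat.pos_of_ne_zero h0) (Nat.mod_lt _ h.pos)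
      fun i => hc _

end windows

/-! ### Renormalization -/

/-- A Lyndon pair over `{0, 1}` whose smallest word starts with `0` and whose largest word ends
with `0`. -/
structure BinaryPair (M : ℕ) (r l : ℕ → ℕ) : Prop extends LyndonPair M r l where
  le_one : ∀ i, r i ≤ 1
  first : r 0 = 0
  last_right : l (M - 1) = 0

theorem shiftn_one_pred {M : ℕ} (hM : 0 < M) {x : ℕ → ℕ} (hx : Function.Periodic x M) :
    shiftn 1 (shiftn (M - 1) x) = x := by
  rw [shiftn_shiftn, Nat.sub_add_cancel hM, shiftn_of_periodic hx]

namespace BinaryPair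

variable {M : ℕ} {r l : ℕ → ℕ}

theorem last_left (h : BinaryPair M r l) : r (M - 1) = 1 :=
  le_antisymm (h.le_one _) h.last

theorem two_le (h : BinaryPair M r l) : 2 ≤ M := by
  by_contra hM
  have hlast := h.last_left
  rw [show M - 1 = 0 by omega, h.first] at hlast
  exact zero_ne_one hlast

theorem right_le_one (h : BinaryPair M r l) (i : ℕ) : l i ≤ 1 := by
  obtain ⟨j, rfl⟩ := h.rot
  exact h.le_one _

theorem first_right (h : BinaryPair M r l) : l 0 = 1 := by
  refine le_antisymm (h.right_le_one 0) (not_lt.mp fun hlt => (h.max (M - 1)).not_gt ?_)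
  exact ⟨0, fun i hi => absurd hi (Nat.not_lt_zero i), by simpa [h.last_left] using hlt⟩

theorem shiftn_pred_left (h : BinaryPair M r l) : shiftn 1 (shiftn (M - 1) r) = r :=
  shiftn_one_pred h.pos h.per

theorem shiftn_succ_pred_left (h : BinaryPair M r l) (q : ℕ) :
    shiftn 1 (shiftn q (shiftn (M - 1) r)) = shiftn q r := by
  rw [shiftn_shiftn, add_comm, ← shiftn_shiftn, h.shiftn_pred_left]

theorem shiftn_pred_right (h : BinaryPair M r l) : shiftn 1 (shiftn (M - 1) l) = l :=
  shiftn_one_pred h.pos h.per_right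

theorem zero_lt (h : BinaryPair M r l) : toLex (fun _ => 0) < toLex r := by
  have hle : toLex (fun _ => 0) ≤ toLex r := not_lt.mp fun ⟨k, _, hk⟩ => Nat.not_lt_zero _ hk
  refine lt_of_le_of_ne hle fun heq => ?_
  have hlast := h.last_left
  rw [← toLex_inj.mp heq] at hlast
  exact zero_ne_one hlast

theorem lt_one (h : BinaryPair M r l) : toLex l < toLex (fun _ => 1) := by
  have hle : toLex l ≤ toLex (fun _ => 1) :=
    not_lt.mp fun ⟨k, _, hk⟩ => (h.right_le_one k).not_gt hk
  refine lt_of_le_of_ne hle fun heq => ?_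
  have hlast := h.last_right
  rw [toLex_inj.mp heq] at hlast
  exact one_ne_zero hlast

theorem pred_left_zero (h : BinaryPair M r l) : shiftn (M - 1) r 0 = 1 := by
  rw [shiftn_apply_zero, h.last_left]

theorem pred_left_one (h : BinaryPair M r l) : shiftn (M - 1) r 1 = 0 :=
  (congrFun h.shiftn_pred_left 0).trans h.first

theorem pred_right_zero (h : BinaryPair M r l) : shiftn (M - 1) l 0 = 0 := by
  rw [shiftn_apply_zero, h.last_right]

theorem pred_right_one (h : BinaryPair M r l) : shiftn (M - 1) l 1 = 1 :=
  (congrFun h.shiftn_pred_right 0).trans h.first_right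

end BinaryPair

section renormalize

variable {N M : ℕ} {a b r l c : ℕ → ℕ}

theorem renormalize_left_periodic (h : LyndonPair N a b) (hr : BinaryPair M r l) :
    Function.Periodic (substSeq N a b (shiftn (M - 1) r)) (N * M) := by
  have hshift := shiftn_mul_substSeq (a := a) (b := b) h.pos (shiftn (M - 1) r) M
  rw [shiftn_shiftn, add_comm, ← shiftn_shiftn, shiftn_of_periodic hr.per, mul_comm] at hshift
  exact congrFun hshift

theorem one_le_renormalize_left_last (h : LyndonPair N a b) (hr : BinaryPair M r l) :
    1 ≤ substSeq N a b (shiftn (M - 1) r) (N * M - 1) := by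
  have hN := h.pos
  have hlast : N * M - 1 = (M - 1) * N + (N - 1) := by
    rw [Nat.sub_one_mul, mul_comm]
    have := Nat.le_mul_of_pos_left N hr.pos
    omega
  have hdigit : shiftn (M - 1) r (M - 1 + 1) = 1 :=
    (congrFun hr.shiftn_pred_left (M - 1)).trans hr.last_left
  rw [hlast, substSeq_mul_add _ _ (by omega), hdigit, substDigit_one_last h]
  exact Nat.le_add_left 1 _

theorem renormalize_left_lt_shiftn (h : LyndonPair N a b) (hr : BinaryPair M r l) {i : ℕ}
    (hi : 0 < i) (hiN : i < N * M) :
    toLex (substSeq N a b (shiftn (M - 1) r)) <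
      toLex (shiftn i (substSeq N a b (shiftn (M - 1) r))) := by
  have hleft := (takeSeq_substSeq_covBy h hr.pred_left_zero hr.pred_left_one).lt
  by_cases hwindow : i % N ≠ 0 ∨ shiftn (M - 1) r (i / N) = 0
  · exact lt_of_takeSeq_lt
      (hleft.trans_le (takeSeq_left_le_shiftn_substSeq h (fun _ => hr.le_one _) hwindow))
  · push Not at hwindow
    obtain ⟨q, rfl⟩ := Nat.dvd_of_mod_eq_zero hwindow.1
    rw [Nat.mul_div_cancel_left q h.pos] at hwindow
    rw [mul_comm N q, shiftn_mul_substSeq h.pos]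
    refine substSeq_lt h ?_ (fun _ => hr.le_one _) ?_
    · rw [hr.pred_left_zero, shiftn_apply_zero]
      exact (le_antisymm (hr.le_one _) (Nat.one_le_iff_ne_zero.mpr hwindow.2)).symm
    · rw [hr.shiftn_pred_left, hr.shiftn_succ_pred_left]
      exact hr.min q (Nat.pos_of_mul_pos_left hi) (Nat.lt_of_mul_lt_mul_left hiN)

theorem shiftn_renormalize_left_le (h : LyndonPair N a b) (hr : BinaryPair M r l) (i : ℕ) :
    toLex (shiftn i (substSeq N a b (shiftn (M - 1) r))) ≤
      toLex (substSeq N a b (shiftn (M - 1) l)) := by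
  have hright := (takeSeq_covBy_substSeq h hr.pred_right_zero hr.pred_right_one).lt
  by_cases hwindow : i % N ≠ 0 ∨ shiftn (M - 1) r (i / N) = 1
  · have hle := takeSeq_shiftn_substSeq_le_right h (fun j => hr.le_one (j + (M - 1))) hwindow
    exact (lt_of_takeSeq_lt (hle.trans_lt hright)).le
  · push Not at hwindow
    obtain ⟨q, rfl⟩ := Nat.dvd_of_mod_eq_zero hwindow.1
    rw [Nat.mul_div_cancel_left q h.pos] at hwindow
    rw [mul_comm N q, shiftn_mul_substSeq h.pos]
    refine substSeq_le h ?_ (fun _ => hr.right_le_one _) ?_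
    · rw [hr.pred_right_zero, shiftn_apply_zero]
      exact Nat.lt_one_iff.mp (lt_of_le_of_ne (hr.le_one _) hwindow.2)
    · rw [hr.shiftn_succ_pred_left, hr.shiftn_pred_right]
      exact hr.max q

theorem LyndonPair.renormalize (h : LyndonPair N a b) (hr : BinaryPair M r l) :
    LyndonPair (N * M) (substSeq N a b (shiftn (M - 1) r))
      (substSeq N a b (shiftn (M - 1) l)) where
  pos := Nat.mul_pos h.pos hr.pos
  per := renormalize_left_periodic h hr
  rot := by
    obtain ⟨j, hj⟩ := hr.rot
    refine ⟨j * N, ?_⟩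
    rw [shiftn_mul_substSeq h.pos, hj, shiftn_shiftn, shiftn_shiftn, add_comm]
  last := one_le_renormalize_left_last h hr
  min _ := renormalize_left_lt_shiftn h hr
  max := shiftn_renormalize_left_le h hr

theorem substSeq_headSeq_lt_renormalize (h : LyndonPair N a b) (hr : BinaryPair M r l) :
    toLex (substSeq N a b (headSeq 1 0)) < toLex (substSeq N a b (shiftn (M - 1) r)) := by
  refine substSeq_lt h hr.pred_left_zero.symm (fun _ => hr.le_one _) ?_
  rw [hr.shiftn_pred_left]
  exact hr.zero_lt

theorem renormalize_lt_substSeq_headSeq (h : LyndonPair N a b) (hr : BinaryPair M r l) :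
    toLex (substSeq N a b (shiftn (M - 1) l)) < toLex (substSeq N a b (headSeq 0 1)) := by
  refine substSeq_lt h hr.pred_right_zero (fun i => ?_) ?_
  · rcases i with _ | i
    exacts [zero_le_one, le_rfl]
  · rw [hr.shiftn_pred_right]
    exact hr.lt_one

/-- Every sequence all of whose shifts lie between `a` and `b` is eventually periodic. -/
def ForcesEvPer (a b : ℕ → ℕ) : Prop :=
  ∀ d : ℕ → ℕ, (∀ i, toLex a ≤ toLex (shiftn i d)) → (∀ i, toLex (shiftn i d) ≤ toLex b) → EvPer d

theorem shiftn_substSeq_headSeq_zero (h : LyndonPair N a b) (p : ℕ) :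
    shiftn N (substSeq N a b (headSeq p 0)) = b := by
  rw [shiftn_substSeq h.pos, shiftn_one_headSeq, substSeq_const_zero h]

theorem shiftn_substSeq_headSeq_one (h : LyndonPair N a b) (p : ℕ) :
    shiftn N (substSeq N a b (headSeq p 1)) = a := by
  rw [shiftn_substSeq h.pos, shiftn_one_headSeq, substSeq_const_one h]

theorem ForcesEvPer.relax (hab : ForcesEvPer a b) (h : LyndonPair N a b) {d : ℕ → ℕ}
    (hlow : ∀ i, toLex a ≤ toLex (shiftn i d))
    (hupp : ∀ i, toLex (shiftn i d) ≤ toLex (substSeq N a b (headSeq 0 1))) :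
    EvPer d := by
  by_cases hle : ∀ i, takeSeq N (shiftn i d) ≤ takeSeq N b
  · refine hab d hlow fun i => le_of_forall_takeSeq_shiftn_le h.pos h.per_right fun q => ?_
    rw [shiftn_shiftn]
    exact hle _
  push Not at hle
  obtain ⟨i, hi⟩ := hle
  have hcov := takeSeq_covBy_substSeq h (headSeq_zero 0 1) (headSeq_one 0 1)
  have heq := le_antisymm (takeSeq_le_of_le (hupp i) N) (hcov.ge_of_gt hi)
  have htail : shiftn (i + N) d = a := by
    refine toLex_inj.mp (le_antisymm ?_ (hlow _))
    refine not_lt.mp fun hlt => (hupp i).not_gt ?_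
    rw [← shiftn_substSeq_headSeq_one h 0, ← shiftn_shiftn] at hlt
    exact (shiftn_lt_shiftn_iff heq.symm).mp hlt
  exact EvPer.of_shiftn (htail ▸ evPer_of_periodic h.pos h.per)

/-- The alternatives `y < a` and `b < y`, labelled by the digit `1` resp. `0` that has just been
read when `y` is decoded as an image of the substitution. -/
def Straddles (a b : ℕ → ℕ) (p : ℕ) (y : ℕ → ℕ) : Prop :=
  p = 1 ∧ toLex y < toLex a ∨ p = 0 ∧ toLex b < toLex y

theorem Straddles.exists_block (h : LyndonPair N a b) {p : ℕ} {y : ℕ → ℕ}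
    (hlow : toLex (substSeq N a b (headSeq 1 0)) < toLex y)
    (hupp : toLex y < toLex (substSeq N a b (headSeq 0 1)))
    (hy : Straddles a b p y) :
    ∃ d, takeSeq N y = takeSeq N (substSeq N a b (headSeq p d)) ∧
      Straddles a b d (shiftn N y) := by
  rcases hy with ⟨rfl, hy⟩ | ⟨rfl, hy⟩
  · have hcov := takeSeq_substSeq_covBy h (headSeq_zero 1 0) (headSeq_one 1 0)
    rcases hcov.eq_or_eq (takeSeq_le_of_le hlow.le N) (takeSeq_le_of_le hy.le N) with heq | heq
    · refine ⟨0, heq, Or.inr ⟨rfl, ?_⟩⟩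
      rw [← shiftn_substSeq_headSeq_zero h 1]
      exact (shiftn_lt_shiftn_iff heq.symm).mpr hlow
    · refine ⟨1, heq.trans (takeSeq_substSeq_eq_left h rfl rfl).symm, Or.inl ⟨rfl, ?_⟩⟩
      rw [← shiftn_of_periodic h.per]
      exact (shiftn_lt_shiftn_iff heq).mpr hy
  · have hcov := takeSeq_covBy_substSeq h (headSeq_zero 0 1) (headSeq_one 0 1)
    rcases hcov.eq_or_eq (takeSeq_le_of_le hy.le N) (takeSeq_le_of_le hupp.le N) with heq | heq
    · refine ⟨0, heq.trans (takeSeq_substSeq_eq_right h rfl rfl).symm, Or.inr ⟨rfl, ?_⟩⟩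
      rw [← shiftn_of_periodic h.per_right]
      exact (shiftn_lt_shiftn_iff heq.symm).mpr hy
    · refine ⟨1, heq, Or.inl ⟨rfl, ?_⟩⟩
      rw [← shiftn_substSeq_headSeq_one h 0]
      exact (shiftn_lt_shiftn_iff heq).mpr hupp

theorem exists_eq_substSeq (h : LyndonPair N a b) {y : ℕ → ℕ}
    (hlow : ∀ i, toLex (substSeq N a b (headSeq 1 0)) < toLex (shiftn i y))
    (hupp : ∀ i, toLex (shiftn i y) < toLex (substSeq N a b (headSeq 0 1)))
    (hy : toLex y < toLex a) :
    ∃ c : ℕ → ℕ, c 0 = 1 ∧ (∀ i, c i ≤ 1) ∧ y = substSeq N a b c := by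
  have hstep : ∀ q p, Straddles a b p (shiftn (q * N) y) →
      ∃ d, takeSeq N (shiftn (q * N) y) = takeSeq N (substSeq N a b (headSeq p d)) ∧
        Straddles a b d (shiftn ((q + 1) * N) y) := fun q p hp => by
    rw [add_mul, one_mul, ← shiftn_shiftn]
    exact hp.exists_block h (hlow _) (hupp _)
  choose! next hblock hnext using hstep
  let c : ℕ → ℕ := fun q => Nat.rec 1 next q
  have hc : ∀ q, Straddles a b (c q) (shiftn (q * N) y) := fun q => by
    induction q with
    | zero => exact Or.inl ⟨rfl, by simpa using hy⟩
    | succ q ih => exact hnext q _ ih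
  refine ⟨c, rfl, fun q => ?_, funext fun n => ?_⟩
  · rcases hc q with ⟨hq, -⟩ | ⟨hq, -⟩
    exacts [hq.le, hq.trans_le zero_le_one]
  · have hn := takeSeq_eq_iff.mp (hblock _ _ (hc (n / N))) (n % N) (Nat.mod_lt n h.pos)
    rwa [shiftn_apply, Nat.mod_add_div', substSeq_of_lt _ (Nat.mod_lt n h.pos)] at hn

theorem le_shiftn_one_of_zero {x : ℕ → ℕ} (h0 : x 0 = 0) : toLex x ≤ toLex (shiftn 1 x) := by
  refine not_lt.mp fun ⟨k, hk, hlt⟩ => ?_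
  have hzero : ∀ i ≤ k, x i = 0 := fun i => by
    induction i with
    | zero => exact fun _ => h0
    | succ i ih => exact fun hi => (hk i hi).trans (ih (Nat.le_of_succ_le hi))
  exact absurd (hzero k le_rfl) (Nat.ne_of_gt (Nat.zero_lt_of_lt hlt))

theorem shiftn_one_le_of_one {x : ℕ → ℕ} (hx : ∀ i, x i ≤ 1) (h0 : x 0 = 1) :
    toLex (shiftn 1 x) ≤ toLex x := by
  refine not_lt.mp fun ⟨k, hk, hlt⟩ => ?_
  have hone : ∀ i ≤ k, x i = 1 := fun i => by
    induction i with
    | zero => exact fun _ => h0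
    | succ i ih => exact fun hi => (hk i hi).symm.trans (ih (Nat.le_of_succ_le hi))
  have hlt : x k < x (k + 1) := hlt
  have := hone k le_rfl
  have := hx (k + 1)
  omega

theorem left_le_shiftn_of_renormalize_le (h : LyndonPair N a b) (hr : BinaryPair M r l)
    (hc : ∀ i, c i ≤ 1) (hc0 : c 0 = 1)
    (hlow : ∀ q, toLex (substSeq N a b (shiftn (M - 1) r)) ≤ toLex (substSeq N a b (shiftn q c)))
    (q : ℕ) : toLex r ≤ toLex (shiftn (q + 1) c) := by
  have hone : ∀ q, c q = 1 → toLex r ≤ toLex (shiftn (q + 1) c) := fun q hq => by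
    refine not_lt.mp fun hlt => (hlow q).not_gt (substSeq_lt h ?_ (fun _ => hr.le_one _) ?_)
    · rw [hr.pred_left_zero, shiftn_apply_zero, hq]
    · rwa [hr.shiftn_pred_left, shiftn_shiftn]
  induction q with
  | zero => exact hone 0 hc0
  | succ q ih =>
    rcases Nat.le_one_iff_eq_zero_or_eq_one.mp (hc (q + 1)) with hq | hq
    · refine ih.trans ?_
      rw [← shiftn_shiftn 1 (q + 1)]
      exact le_shiftn_one_of_zero ((shiftn_apply_zero _ _).trans hq)
    · exact hone (q + 1) hq

theorem shiftn_le_right_of_le_renormalize (h : LyndonPair N a b) (hr : BinaryPair M r l)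
    (hc : ∀ i, c i ≤ 1) {q₀ : ℕ} (hq₀ : c q₀ = 0)
    (hupp : ∀ q, toLex (substSeq N a b (shiftn q c)) ≤ toLex (substSeq N a b (shiftn (M - 1) l)))
    (q : ℕ) : toLex (shiftn (q₀ + 1 + q) c) ≤ toLex l := by
  have hzero : ∀ q, c q = 0 → toLex (shiftn (q + 1) c) ≤ toLex l := fun q hq => by
    refine not_lt.mp fun hlt => (hupp q).not_gt (substSeq_lt h ?_ (fun _ => hc _) ?_)
    · rw [hr.pred_right_zero, shiftn_apply_zero, hq]
    · rwa [hr.shiftn_pred_right, shiftn_shiftn]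
  induction q with
  | zero => exact hzero q₀ hq₀
  | succ q ih =>
    rcases Nat.le_one_iff_eq_zero_or_eq_one.mp (hc (q₀ + 1 + q)) with hq | hq
    · exact hzero _ hq
    · refine le_trans ?_ ih
      rw [← add_assoc, ← shiftn_shiftn]
      exact shiftn_one_le_of_one (fun _ => hc _) ((shiftn_apply_zero _ _).trans hq)

theorem evPer_of_substSeq_mem_renormalize (h : LyndonPair N a b) (hr : BinaryPair M r l)
    (hrl : ForcesEvPer r l) (hc : ∀ i, c i ≤ 1) (hc0 : c 0 = 1)
    (hlow : ∀ q, toLex (substSeq N a b (shiftn (M - 1) r)) ≤ toLex (substSeq N a b (shiftn q c)))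
    (hupp : ∀ q, toLex (substSeq N a b (shiftn q c)) ≤ toLex (substSeq N a b (shiftn (M - 1) l))) :
    EvPer c := by
  by_cases hzero : ∃ q, c q = 0
  · obtain ⟨q₀, hq₀⟩ := hzero
    refine EvPer.of_shiftn (m := q₀ + 1) (hrl _ (fun j => ?_) fun j => ?_)
    · rw [shiftn_shiftn, add_right_comm]
      exact left_le_shiftn_of_renormalize_le h hr hc hc0 hlow _
    · rw [shiftn_shiftn]
      exact shiftn_le_right_of_le_renormalize h hr hc hq₀ hupp j
  · push Not at hzero
    have hone : ∀ q, c q = 1 := fun q => le_antisymm (hc q) (Nat.one_le_iff_ne_zero.mpr (hzero q))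
    exact evPer_of_periodic one_pos fun q => (hone _).trans (hone q).symm

theorem ForcesEvPer.renormalize (h : LyndonPair N a b) (hab : ForcesEvPer a b)
    (hr : BinaryPair M r l) (hrl : ForcesEvPer r l) :
    ForcesEvPer (substSeq N a b (shiftn (M - 1) r)) (substSeq N a b (shiftn (M - 1) l)) := by
  intro d hlow hupp
  have hlower := substSeq_headSeq_lt_renormalize h hr
  have hupper := renormalize_lt_substSeq_headSeq h hr
  by_cases hd : ∀ i, toLex a ≤ toLex (shiftn i d)
  · exact hab.relax h hd fun i => (hupp i).trans hupper.le
  push Not at hd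
  obtain ⟨i, hi⟩ := hd
  obtain ⟨c, hc0, hc, hdc⟩ := exists_eq_substSeq h (y := shiftn i d)
    (fun j => by rw [shiftn_shiftn]; exact hlower.trans_le (hlow _))
    (fun j => by rw [shiftn_shiftn]; exact (hupp _).trans_lt hupper) hi
  have hblock : ∀ q, substSeq N a b (shiftn q c) = shiftn (i + q * N) d := fun q => by
    rw [← shiftn_mul_substSeq h.pos, ← hdc, shiftn_shiftn]
  refine EvPer.of_shiftn (m := i) ?_
  rw [hdc]
  refine EvPer.substSeq h.pos
    (evPer_of_substSeq_mem_renormalize h hr hrl hc hc0 (fun q => ?_) fun q => ?_)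
  · exact hblock q ▸ hlow _
  · exact hblock q ▸ hupp _

end renormalize

/-! ### Mechanical sequences -/

/-- The mechanical sequence of slope `p / q` and intercept `x / q`. -/
def mech (p q x k : ℕ) : ℕ := ((k + 1) * p + x) / q - (k * p + x) / q

theorem lt_of_sum_range_lt {x y : ℕ → ℕ} {n : ℕ}
    (h : ∀ m < n, ∑ k ∈ Finset.range m, x k = ∑ k ∈ Finset.range m, y k)
    (hn : ∑ k ∈ Finset.range n, x k < ∑ k ∈ Finset.range n, y k) : toLex x < toLex y := by
  rcases n with _ | n
  · exact absurd hn (lt_irrefl 0)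
  rw [Finset.sum_range_succ, Finset.sum_range_succ, h n (Nat.lt_succ_self n)] at hn
  refine ⟨n, fun i hi => ?_, Nat.lt_of_add_lt_add_left hn⟩
  have hsucc := h (i + 1) (Nat.succ_lt_succ hi)
  rw [Finset.sum_range_succ, Finset.sum_range_succ, h i (by omega)] at hsucc
  exact Nat.add_left_cancel hsucc

theorem sum_range_add_shiftn (d : ℕ → ℕ) (i m n : ℕ) :
    ∑ k ∈ Finset.range (m + n), shiftn i d k =
      ∑ k ∈ Finset.range m, shiftn i d k + ∑ k ∈ Finset.range n, shiftn (i + m) d k := by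
  rw [Finset.sum_range_add]
  simp only [shiftn_apply, add_comm m, add_right_comm, ← add_assoc]

section mech

variable {p q : ℕ}

theorem mul_add_div_le_succ (p q x k : ℕ) : (k * p + x) / q ≤ ((k + 1) * p + x) / q :=
  Nat.div_le_div_right (by rw [add_mul]; omega)

theorem sum_mech {x : ℕ} (hx : x < q) (n : ℕ) :
    ∑ k ∈ Finset.range n, mech p q x k = (n * p + x) / q := by
  induction n with
  | zero => simp [Nat.div_eq_of_lt hx]
  | succ n ih =>
    rw [Finset.sum_range_succ, ih, mech, Nat.add_sub_cancel' (mul_add_div_le_succ p q x n)]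

theorem shiftn_mech (hq : 0 < q) (x i : ℕ) :
    shiftn i (mech p q x) = mech p q ((i * p + x) % q) := by
  have hdiv : ∀ k, ((k + i) * p + x) / q = (k * p + (i * p + x) % q) / q + (i * p + x) / q :=
    fun k => by
      rw [← Nat.add_mul_div_right _ _ hq, add_assoc, Nat.mod_add_div', add_mul, add_assoc]
  funext k
  rw [shiftn_apply, mech, mech, hdiv, add_right_comm, hdiv, Nat.add_sub_add_right]

theorem exists_div_lt_div_of_coprime (hpq : p.Coprime q) {x y : ℕ} (hxy : x < y) (hy : y < q) :
    ∃ n, (n * p + x) / q < (n * p + y) / q := by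
  have hq : 0 < q := Nat.zero_lt_of_lt hy
  obtain ⟨n, -, hn⟩ := Nat.exists_mul_mod_eq_of_coprime (q - y) hpq hq.ne'
  have hmod : (n * p + y) % q = 0 := by
    rw [mul_comm, Nat.add_mod, hn, ← Nat.add_mod, Nat.sub_add_cancel hy.le, Nat.mod_self]
  refine ⟨n, ?_⟩
  rw [Nat.div_lt_iff_lt_mul hq, Nat.div_mul_cancel (Nat.dvd_of_mod_eq_zero hmod)]
  exact Nat.add_lt_add_left hxy _

theorem mech_lt (hpq : p.Coprime q) {x y : ℕ} (hxy : x < y) (hy : y < q) :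
    toLex (mech p q x) < toLex (mech p q y) := by
  classical
  have hexists := exists_div_lt_div_of_coprime hpq hxy hy
  refine lt_of_sum_range_lt (n := Nat.find hexists) (fun m hm => ?_) ?_
  · rw [sum_mech (hxy.trans hy), sum_mech hy]
    exact le_antisymm (Nat.div_le_div_right (Nat.add_le_add_left hxy.le _))
      (not_lt.mp (Nat.find_min hexists hm))
  · rw [sum_mech (hxy.trans hy), sum_mech hy]
    exact Nat.find_spec hexists

theorem one_le_mech_zero_last (hp : 0 < p) (hq : 0 < q) : 1 ≤ mech p q 0 (q - 1) := by
  have hfull : (q - 1 + 1) * p / q = p := by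
    rw [Nat.sub_add_cancel hq, Nat.mul_div_cancel_left p hq]
  have hlt : (q - 1) * p / q < p := by
    rw [Nat.div_lt_iff_lt_mul hq, mul_comm p q]
    exact Nat.mul_lt_mul_of_pos_right (Nat.sub_one_lt_of_lt hq) hp
  rw [mech, add_zero, add_zero, hfull]
  exact Nat.sub_pos_of_lt hlt

theorem mech_lyndonPair (hpq : p.Coprime q) (hp : 0 < p) (hq : 0 < q) :
    LyndonPair q (mech p q 0) (mech p q (q - 1)) where
  pos := hq
  per := fun k => (congrFun (shiftn_mech hq 0 q) k).trans (by simp)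
  rot := by
    obtain ⟨j, -, hj⟩ := Nat.exists_mul_mod_eq_of_coprime (q - 1) hpq hq.ne'
    refine ⟨j, ?_⟩
    rw [shiftn_mech hq, add_zero, mul_comm, hj, Nat.mod_eq_of_lt (Nat.sub_one_lt_of_lt hq)]
  last := one_le_mech_zero_last hp hq
  min i hi hiq := by
    rw [shiftn_mech hq, add_zero]
    refine mech_lt hpq (Nat.pos_of_ne_zero fun h0 => ?_) (Nat.mod_lt _ hq)
    have hdvd : q ∣ i := hpq.symm.dvd_of_dvd_mul_right (Nat.dvd_of_mod_eq_zero h0)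
    exact (Nat.le_of_dvd hi hdvd).not_gt hiq
  max i := by
    rw [shiftn_mech hq]
    rcases (Nat.le_sub_one_of_lt (Nat.mod_lt (i * p + 0) hq)).lt_or_eq with hlt | heq
    · exact (mech_lt hpq hlt (Nat.sub_one_lt_of_lt hq)).le
    · rw [heq]

theorem mech_le_one (hq : 0 < q) (h : p ≤ q) (x i : ℕ) : mech p q x i ≤ 1 := by
  have hle : ((i + 1) * p + x) / q ≤ (i * p + x) / q + 1 := by
    rw [← Nat.add_div_right _ hq]
    exact Nat.div_le_div_right (by rw [add_mul]; omega)
  exact Nat.sub_le_of_le_add (hle.trans_eq (add_comm _ 1))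

theorem mech_binaryPair (hpq : p.Coprime q) (hp : 0 < p) (h : p < q) :
    BinaryPair q (mech p q 0) (mech p q (q - 1)) := by
  have hq : 0 < q := hp.trans h
  refine ⟨mech_lyndonPair hpq hp hq, mech_le_one hq h.le 0, ?_, ?_⟩
  · simp [mech, Nat.div_eq_of_lt h]
  · have hfull : ((q - 1 + 1) * p + (q - 1)) / q = p := by
      rw [Nat.sub_add_cancel hq, Nat.mul_add_div hq, Nat.div_eq_of_lt (by omega), add_zero]
    have hpred : ((q - 1) * p + (q - 1)) / q = p := by
      have hle : p ≤ q * p := Nat.le_mul_of_pos_left p hq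
      have heq : (q - 1) * p + (q - 1) = q * p + (q - 1 - p) := by
        rw [Nat.sub_one_mul]
        omega
      rw [heq, Nat.mul_add_div hq, Nat.div_eq_of_lt (by omega), add_zero]
    rw [mech, hfull, hpred, Nat.sub_self]

theorem div_le_sum_of_mech_le (hq : 0 < q) {d : ℕ → ℕ}
    (hlow : ∀ i, toLex (mech p q 0) ≤ toLex (shiftn i d))
    (n i : ℕ) : n * p / q ≤ ∑ k ∈ Finset.range n, shiftn i d k := by
  induction n using Nat.strong_induction_on generalizing i with
  | _ n ih =>
    refine not_lt.mp fun hlt =>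
      (hlow i).not_gt (lt_of_sum_range_lt (n := n) (fun m hm => ?_) (by rwa [sum_mech hq]))
    rw [sum_mech hq, add_zero]
    refine le_antisymm ?_ (ih m hm i)
    obtain ⟨t, rfl⟩ := Nat.exists_eq_add_of_le hm.le
    rcases Nat.eq_zero_or_pos m with rfl | hm0
    · exact Nat.zero_le _
    have htail := ih t (Nat.lt_add_of_pos_left hm0) (i + m)
    have hfloor : (m + t) * p / q ≤ m * p / q + t * p / q + 1 := by
      rw [add_mul, Nat.add_div hq]
      split_ifs <;> omega
    rw [sum_range_add_shiftn] at hlt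
    omega

theorem sum_le_div_of_le_mech (hq : 0 < q) {d : ℕ → ℕ}
    (hupp : ∀ i, toLex (shiftn i d) ≤ toLex (mech p q (q - 1))) (n i : ℕ) :
    ∑ k ∈ Finset.range n, shiftn i d k ≤ (n * p + (q - 1)) / q := by
  have hq' : q - 1 < q := Nat.sub_one_lt_of_lt hq
  induction n using Nat.strong_induction_on generalizing i with
  | _ n ih =>
    refine not_lt.mp fun hlt =>
      (hupp i).not_gt (lt_of_sum_range_lt (n := n) (fun m hm => ?_) (by rwa [sum_mech hq']))
    rw [sum_mech hq']
    refine le_antisymm ?_ (ih m hm i)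
    obtain ⟨t, rfl⟩ := Nat.exists_eq_add_of_le hm.le
    rcases Nat.eq_zero_or_pos m with rfl | hm0
    · simp [Nat.div_eq_of_lt hq']
    have htail := ih t (Nat.lt_add_of_pos_left hm0) (i + m)
    have hceil : (m * p + (q - 1)) / q + (t * p + (q - 1)) / q ≤
        ((m + t) * p + (q - 1)) / q + 1 := by
      refine Nat.div_add_div_le_add_div.trans ?_
      rw [← Nat.add_div_right _ hq, add_mul]
      exact Nat.div_le_div_right (by omega)
    rw [sum_range_add_shiftn] at hlt
    omega

theorem mech_forcesEvPer (hq : 0 < q) : ForcesEvPer (mech p q 0) (mech p q (q - 1)) := by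
  intro d hlow hupp
  have hsum : ∀ i, ∑ k ∈ Finset.range q, shiftn i d k = p := fun i => by
    have hge := div_le_sum_of_mech_le hq hlow q i
    have hle := sum_le_div_of_le_mech hq hupp q i
    rw [Nat.mul_div_cancel_left p hq] at hge
    rw [Nat.mul_add_div hq, Nat.div_eq_of_lt (Nat.sub_one_lt_of_lt hq)] at hle
    exact le_antisymm hle hge
  refine evPer_of_periodic hq fun k => ?_
  have hsucc := sum_range_add_shiftn d k 1 q
  rw [add_comm 1 q, Finset.sum_range_succ, hsum, hsum, Finset.sum_range_one, shiftn_apply_zero,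
    shiftn_apply, add_comm q k, add_comm] at hsucc
  exact Nat.add_right_cancel hsucc

end mech

/-! ### Farey words -/

/-- A word is Christoffel if its partial sums are the integer parts of the multiples of its
slope `w.sum / w.length`, in lowest terms. -/
structure IsChristoffel (w : List ℕ) : Prop where
  pos : 0 < w.length
  coprime : w.sum.Coprime w.length
  sum_take : ∀ k ≤ w.length, (w.take k).sum = k * w.sum / w.length

/-- Neighbouring fractions `p / q < p' / q'`, that is `p' q - p q' = 1`, written for the slopes of
two words. -/
def FareyAdj (u v : List ℕ) : Prop := v.sum * u.length = u.sum * v.length + 1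

theorem mul_add_div_add_eq_left {p q p' q' k : ℕ} (hq : 0 < q) (hq' : 0 < q')
    (h : p' * q = p * q' + 1) (hk : k ≤ q) :
    k * (p + p') / (q + q') = k * p / q := by
  obtain ⟨m, x, hx, hmx⟩ : ∃ m x, x < q ∧ k * p = q * m + x :=
    ⟨_, _, Nat.mod_lt _ hq, (Nat.div_add_mod (k * p) q).symm⟩
  have hscale : q * (k * (p + p')) = (q + q') * (q * m + x) + k := by
    rw [← hmx]
    linear_combination k * h
  rw [hmx, Nat.mul_add_div hq, Nat.div_eq_of_lt hx, add_zero]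
  refine Nat.div_eq_of_lt_le ?_ ?_
  · refine Nat.le_of_mul_le_mul_left ?_ hq
    rw [hscale]
    nlinarith [Nat.zero_le ((q + q') * x)]
  · refine Nat.lt_of_mul_lt_mul_left (a := q) ?_
    rw [hscale]
    nlinarith [Nat.mul_le_mul_left (q + q') (Nat.succ_le_of_lt hx)]

theorem add_mul_add_div_add_eq_right {p q p' q' j : ℕ} (hq' : 0 < q')
    (h : p' * q = p * q' + 1) (hj : j ≤ q') :
    (q + j) * (p + p') / (q + q') = p + j * p' / q' := by
  obtain ⟨m, x, hx, hmx⟩ : ∃ m x, x < q' ∧ j * p' = q' * m + x :=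
    ⟨_, _, Nat.mod_lt _ hq', (Nat.div_add_mod (j * p') q').symm⟩
  have hscale : q' * ((q + j) * (p + p')) + j = (q + q') * (q' * (p + m) + x) + q' := by
    rw [mul_add q', add_assoc (q' * p), ← hmx]
    linear_combination q' * h + j * h.symm
  rw [hmx, Nat.mul_add_div hq', Nat.div_eq_of_lt hx, add_zero]
  refine Nat.div_eq_of_lt_le ?_ ?_
  · refine Nat.le_of_mul_le_mul_left ?_ hq'
    nlinarith [Nat.zero_le ((q + q') * x)]
  · refine Nat.lt_of_mul_lt_mul_left (a := q') ?_
    nlinarith [Nat.mul_le_mul_left (q + q') (Nat.succ_le_of_lt hx)]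

theorem FareyAdj.coprime {u v : List ℕ} (h : FareyAdj u v) :
    (u.sum + v.sum).Coprime (u.length + v.length) := by
  refine Nat.Coprime.symm (Nat.isCoprime_iff_coprime.mp ⟨-u.sum, u.length, ?_⟩)
  have hadj : (v.sum * u.length : ℤ) = u.sum * v.length + 1 := mod_cast h
  rw [Nat.cast_add, Nat.cast_add]
  linear_combination hadj

theorem FareyAdj.append_left {u v : List ℕ} (h : FareyAdj u v) : FareyAdj u (u ++ v) := by
  rw [FareyAdj] at *
  rw [List.sum_append, List.length_append]
  linear_combination h

theorem FareyAdj.append_right {u v : List ℕ} (h : FareyAdj u v) : FareyAdj (u ++ v) v := by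
  rw [FareyAdj] at *
  rw [List.sum_append, List.length_append]
  linear_combination h

theorem sum_theta (w : List ℕ) : (theta w).sum = w.sum + w.length := by
  simp [theta, List.sum_map_add]

theorem length_theta (w : List ℕ) : (theta w).length = w.length := List.length_map _

namespace IsChristoffel

variable {w : List ℕ}

theorem perSeq_eq (h : IsChristoffel w) : perSeq w = mech w.sum w.length 0 := by
  have hword : ∀ k < w.length, w.getD k 0 = mech w.sum w.length 0 k := fun k hk => by
    have hsum := List.sum_take_succ w k hk
    rw [h.sum_take (k + 1) hk, h.sum_take k hk.le] at hsum
    rw [List.getD_eq_getElem _ _ hk, mech, add_zero, add_zero, hsum, Nat.add_sub_cancel_left]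
  have hper : Function.Periodic (mech w.sum w.length 0) w.length := fun k =>
    (congrFun (shiftn_mech h.pos 0 w.length) k).trans (by simp)
  funext k
  rw [perSeq, hword _ (Nat.mod_lt _ h.pos), hper.map_mod_nat]

theorem append {u v : List ℕ} (hu : IsChristoffel u) (hv : IsChristoffel v)
    (h : FareyAdj u v) : IsChristoffel (u ++ v) := by
  refine ⟨List.length_append ▸ Nat.add_pos_left hu.pos _, ?_, fun k hk => ?_⟩
  · rw [List.sum_append, List.length_append]
    exact h.coprime
  · rw [List.length_append] at hk ⊢
    rw [List.take_append, List.sum_append, List.sum_append]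
    rcases le_total k u.length with hku | hku
    · rw [Nat.sub_eq_zero_of_le hku, List.take_zero, List.sum_nil, add_zero, hu.sum_take k hku,
        mul_add_div_add_eq_left hu.pos hv.pos h hku]
    · obtain ⟨j, rfl⟩ := Nat.exists_eq_add_of_le hku
      have hj : j ≤ v.length := Nat.le_of_add_le_add_left hk
      rw [Nat.add_sub_cancel_left, List.take_of_length_le hku, hv.sum_take j hj,
        add_mul_add_div_add_eq_right hv.pos h hj]

theorem singleton (d : ℕ) : IsChristoffel [d] := by
  refine ⟨Nat.one_pos, Nat.coprime_one_right _, fun k hk => ?_⟩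
  rcases Nat.le_one_iff_eq_zero_or_eq_one.mp hk with rfl | rfl <;> simp

theorem theta (h : IsChristoffel w) : IsChristoffel (theta w) := by
  refine ⟨(length_theta w).symm ▸ h.pos, ?_, fun k hk => ?_⟩
  · rw [sum_theta, length_theta, Nat.coprime_add_self_left]
    exact h.coprime
  · rw [length_theta] at hk
    have htake : (_root_.theta w).take k = _root_.theta (w.take k) := List.map_take.symm
    rw [htake, sum_theta, sum_theta, length_theta, h.sum_take k hk, mul_add,
      Nat.add_mul_div_right _ _ h.pos, List.length_take, min_eq_left hk]

theorem lyndonPair (h : IsChristoffel w) (hsum : 0 < w.sum) :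
    LyndonPair w.length (perSeq w) (mech w.sum w.length (w.length - 1)) := by
  rw [h.perSeq_eq]
  exact mech_lyndonPair h.coprime hsum h.pos

theorem forcesEvPer (h : IsChristoffel w) :
    ForcesEvPer (perSeq w) (mech w.sum w.length (w.length - 1)) := by
  rw [h.perSeq_eq]
  exact mech_forcesEvPer h.pos

end IsChristoffel

theorem fareyInsert_cons_eq_cons (v : List ℕ) (rest : List (List ℕ)) :
    ∃ l, fareyInsert (v :: rest) = v :: l := by
  cases rest
  exacts [⟨[], rfl⟩, ⟨_, rfl⟩]

theorem isChain_fareyInsert :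
    ∀ {F : List (List ℕ)}, F.IsChain FareyAdj → (fareyInsert F).IsChain FareyAdj
  | [], _ => List.isChain_nil
  | [w], _ => List.isChain_singleton w
  | w :: v :: rest, h => by
    obtain ⟨hadj, hrest⟩ := List.isChain_cons_cons.mp h
    have ih := isChain_fareyInsert hrest
    obtain ⟨l, hl⟩ := fareyInsert_cons_eq_cons v rest
    rw [hl] at ih
    rw [fareyInsert, hl]
    exact .cons_cons hadj.append_left (.cons_cons hadj.append_right ih)

theorem forall_mem_fareyInsert {P : List ℕ → Prop}
    (happend : ∀ u v, FareyAdj u v → P u → P v → P (u ++ v)) :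
    ∀ {F : List (List ℕ)}, F.IsChain FareyAdj → (∀ w ∈ F, P w) → ∀ w ∈ fareyInsert F, P w
  | [], _, h => h
  | [_], _, h => h
  | w :: v :: rest, hF, h => by
    obtain ⟨hadj, hrest⟩ := List.isChain_cons_cons.mp hF
    obtain ⟨hw, hvrest⟩ := List.forall_mem_cons.mp h
    rw [fareyInsert, List.forall_mem_cons, List.forall_mem_cons]
    exact ⟨hw, happend w v hadj hw (List.forall_mem_cons.mp hvrest).1,
      forall_mem_fareyInsert happend hrest hvrest⟩

theorem isChain_fareyLevel (n : ℕ) : (fareyLevel n).IsChain FareyAdj := by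
  induction n with
  | zero => exact .cons_cons rfl (.singleton _)
  | succ n ih => exact isChain_fareyInsert ih

theorem isChristoffel_of_mem_fareyLevel {n : ℕ} :
    ∀ w ∈ fareyLevel n, IsChristoffel w ∧ w.sum ≤ w.length := by
  induction n with
  | zero =>
    exact List.forall_mem_cons.mpr ⟨⟨.singleton 0, Nat.zero_le 1⟩,
      List.forall_mem_singleton.mpr ⟨.singleton 1, le_rfl⟩⟩
  | succ n ih =>
    refine forall_mem_fareyInsert (fun u v hadj hu hv => ⟨hu.1.append hv.1 hadj, ?_⟩)
      (isChain_fareyLevel n) ih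
    rw [List.sum_append, List.length_append]
    exact Nat.add_le_add hu.2 hv.2

theorem isChristoffel_of_mem_FareySet {w : List ℕ} (h : w ∈ FareySet) :
    IsChristoffel w ∧ 0 < w.sum ∧ w.sum < w.length := by
  obtain ⟨⟨n, hn⟩, hne0, hne1⟩ := h
  obtain ⟨hw, hle⟩ := isChristoffel_of_mem_fareyLevel w hn
  have hcop := hw.coprime
  have hsingle : w.length = 1 → w = [w.sum] := fun hlen => by
    obtain ⟨d, rfl⟩ := List.length_eq_one_iff.mp hlen
    rw [List.sum_singleton]
  refine ⟨hw, Nat.pos_of_ne_zero fun hs => hne0 ?_, lt_of_le_of_ne hle fun hs => hne1 ?_⟩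
  · rw [hs, Nat.coprime_zero_left] at hcop
    rw [hsingle hcop, hs]
  · rw [hs, Nat.coprime_self] at hcop
    rw [hsingle hcop, hs, hcop]

theorem isChristoffel_of_mem_FareyExt {w : List ℕ} (h : w ∈ FareyExt) :
    IsChristoffel w ∧ 0 < w.sum := by
  obtain ⟨v, hv, k, rfl⟩ := h
  induction k with
  | zero =>
    rcases hv with hv | rfl
    · exact ⟨(isChristoffel_of_mem_FareySet hv).1, (isChristoffel_of_mem_FareySet hv).2.1⟩
    · exact ⟨.singleton 1, Nat.one_pos⟩
  | succ k ih =>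
    rw [Function.iterate_succ_apply', sum_theta]
    exact ⟨ih.1.theta, Nat.add_pos_left ih.2 _⟩

/-! ### Words and their periodic sequences -/

theorem perSeq_apply {w : List ℕ} {k : ℕ} (hk : k < w.length) : perSeq w k = w.getD k 0 := by
  rw [perSeq, Nat.mod_eq_of_lt hk]

theorem perSeq_rotate {w : List ℕ} (hw : 0 < w.length) (i : ℕ) :
    perSeq (w.rotate i) = shiftn i (perSeq w) := by
  funext k
  have hk : k % w.length < (w.rotate i).length := (Nat.mod_lt _ hw).trans_eq (by simp)
  rw [shiftn_apply, perSeq, perSeq, List.length_rotate, List.getD_eq_getElem _ _ hk,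
    List.getElem_rotate, List.getD_eq_getElem _ _ (Nat.mod_lt _ hw)]
  simp only [Nat.mod_add_mod]

theorem perSeq_lt_of_lt {u v : List ℕ} (hlen : u.length = v.length) (h : u < v) :
    toLex (perSeq u) < toLex (perSeq v) := by
  rcases List.lt_iff_exists.mp h with ⟨-, hlt⟩ | ⟨k, hku, hkv, hagree, hlt⟩
  · exact absurd hlen hlt.ne
  · have hget : ∀ {w : List ℕ} {i : ℕ} (hi : i < w.length), perSeq w i = w[i] := fun hi => by
      rw [perSeq_apply hi, List.getD_eq_getElem _ _ hi]
    refine ⟨k, fun i hi => ?_, ?_⟩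
    · exact (hget (hi.trans hku)).trans ((hagree i hi).trans (hget (hi.trans hkv)).symm)
    · exact (hget hku).trans_lt (hlt.trans_eq (hget hkv).symm)

theorem perSeq_eq_of_periodic {w : List ℕ} (hw : 0 < w.length) {x : ℕ → ℕ}
    (hx : Function.Periodic x w.length) (h : ∀ n < w.length, w.getD n 0 = x n) : perSeq w = x := by
  funext n
  rw [perSeq, h _ (Nat.mod_lt _ hw), hx.map_mod_nat]

theorem maxCyc_mem_and_le {w : List ℕ} (hw : w ≠ []) :
    (∃ i, maxCyc w = w.rotate i) ∧ ∀ i < w.length, w.rotate i ≤ maxCyc w := by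
  have hne : (List.range w.length).map w.rotate ≠ [] := by simpa using hw
  have hmax : ((List.range w.length).map w.rotate).max hne = maxCyc w := by
    rw [maxCyc, List.foldl_max_eq_max hne, max_eq_right]
    exact not_lt.mp (List.not_lt_nil _)
  rw [List.max_eq_iff] at hmax
  obtain ⟨i, -, hi⟩ := List.mem_map.mp hmax.1
  exact ⟨⟨i, hi.symm⟩, fun i hi => hmax.2 _ (List.mem_map.mpr ⟨i, List.mem_range.mpr hi, rfl⟩)⟩

theorem length_maxCyc {w : List ℕ} (hw : w ≠ []) : (maxCyc w).length = w.length := by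
  obtain ⟨i, hi⟩ := (maxCyc_mem_and_le hw).1
  rw [hi, List.length_rotate]

theorem perSeq_maxCyc {w : List ℕ} {b : ℕ → ℕ} (h : LyndonPair w.length (perSeq w) b) :
    perSeq (maxCyc w) = b := by
  have hw : w ≠ [] := List.ne_nil_of_length_pos h.pos
  obtain ⟨⟨i, hi⟩, hle⟩ := maxCyc_mem_and_le hw
  refine toLex_inj.mp (le_antisymm ?_ ?_)
  · rw [hi, perSeq_rotate h.pos]
    exact h.max i
  · obtain ⟨j, rfl⟩ := h.rot
    rw [← perSeq_rotate h.pos, ← List.rotate_mod]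
    rcases (hle _ (Nat.mod_lt j h.pos)).lt_or_eq with hlt | heq
    · refine (perSeq_lt_of_lt ?_ hlt).le
      rw [List.length_rotate, length_maxCyc hw]
    · rw [heq]

theorem getLast!_eq_getD {w : List ℕ} (hw : w ≠ []) : w.getLast! = w.getD (w.length - 1) 0 := by
  obtain ⟨l, x, rfl⟩ := w.eq_nil_or_concat.resolve_left hw
  simp

theorem getD_dropLast_append {w : List ℕ} (hw : w ≠ []) (x : ℕ) {k : ℕ} (hk : k < w.length) :
    (w.dropLast ++ [x]).getD k 0 = if k + 1 = w.length then x else w.getD k 0 := by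
  obtain ⟨l, y, rfl⟩ := w.eq_nil_or_concat.resolve_left hw
  rw [List.length_concat] at hk
  rcases Nat.lt_succ_iff_lt_or_eq.mp hk with hlt | rfl
  · simp [hlt, hlt.ne, List.getElem?_append]
  · simp

theorem length_dropLast_append {w : List ℕ} (hw : w ≠ []) (x : ℕ) :
    (w.dropLast ++ [x]).length = w.length := by
  rw [List.length_append, List.length_dropLast, List.length_singleton,
    Nat.sub_add_cancel (List.length_pos_of_ne_nil hw)]

theorem getD_wplus {w : List ℕ} (hw : w ≠ []) {k : ℕ} (hk : k < w.length) :
    (wplus w).getD k 0 = if k + 1 = w.length then w.getD k 0 + 1 else w.getD k 0 := by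
  rw [wplus, getD_dropLast_append hw _ hk, getLast!_eq_getD hw]
  split_ifs with hlast
  · rw [← hlast, Nat.add_sub_cancel]
  · rfl

theorem getD_wminus {w : List ℕ} (hw : w ≠ []) {k : ℕ} (hk : k < w.length) :
    (wminus w).getD k 0 = if k + 1 = w.length then w.getD k 0 - 1 else w.getD k 0 := by
  rw [wminus, getD_dropLast_append hw _ hk, getLast!_eq_getD hw]
  split_ifs with hlast
  · rw [← hlast, Nat.add_sub_cancel]
  · rfl

/-! ### The substitution on words -/

section subst

variable {w : List ℕ} {b : ℕ → ℕ}

theorem length_phiBlock (hw : w ≠ []) (p d : ℕ) : (phiBlock w p d).length = w.length := by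
  have hlen := length_maxCyc hw
  have hmax : maxCyc w ≠ [] :=
    List.ne_nil_of_length_pos (hlen.symm ▸ List.length_pos_of_ne_nil hw)
  rw [phiBlock]
  split_ifs
  exacts [hlen, length_dropLast_append hw _, (length_dropLast_append hmax _).trans hlen, rfl]

theorem getD_phiBlock (h : LyndonPair w.length (perSeq w) b) (p d : ℕ) {k : ℕ}
    (hk : k < w.length) :
    (phiBlock w p d).getD k 0 = substDigit w.length (perSeq w) b p d k := by
  have hw : w ≠ [] := List.ne_nil_of_length_pos h.pos
  have hlen := length_maxCyc hw
  have hmax : maxCyc w ≠ [] := List.ne_nil_of_length_pos (hlen.symm ▸ h.pos)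
  have hkmax : k < (maxCyc w).length := hlen.symm ▸ hk
  rw [phiBlock, substDigit, ← perSeq_maxCyc h, perSeq_apply hk, perSeq_apply hkmax]
  split_ifs <;> simp_all only [getD_wplus, getD_wminus, ne_eq, not_false_eq_true, if_true, if_false]

theorem length_phiAux (hw : w ≠ []) (r : List ℕ) (p : ℕ) :
    (phiAux w p r).length = w.length * r.length := by
  induction r generalizing p with
  | nil => rfl
  | cons d r ih =>
    rw [phiAux, List.length_append, length_phiBlock hw, ih, List.length_cons, Nat.mul_succ,
      add_comm]

theorem length_subst (hw : w ≠ []) (r : List ℕ) : (subst w r).length = w.length * r.length := by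
  rcases r with _ | ⟨d, r⟩
  exacts [rfl, length_phiAux hw (d :: r) (1 - d)]

theorem getD_phiAux (h : LyndonPair w.length (perSeq w) b) (r : List ℕ) (p : ℕ) {q k : ℕ}
    (hq : q < r.length) (hk : k < w.length) :
    (phiAux w p r).getD (q * w.length + k) 0 =
      substDigit w.length (perSeq w) b ((p :: r).getD q 0) (r.getD q 0) k := by
  have hw : w ≠ [] := List.ne_nil_of_length_pos h.pos
  induction r generalizing p q with
  | nil => exact absurd hq (Nat.not_lt_zero q)
  | cons d r ih =>
    rw [phiAux]
    rcases q with _ | q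
    · rw [zero_mul, zero_add, List.getD_append _ _ _ _ (by rwa [length_phiBlock hw]),
        getD_phiBlock h _ _ hk]
      rfl
    · have hpos : (q + 1) * w.length + k = w.length + (q * w.length + k) := by ring
      rw [hpos, List.getD_append_right _ _ _ _ (by rw [length_phiBlock hw]; omega),
        length_phiBlock hw, Nat.add_sub_cancel_left, ih d (Nat.lt_of_succ_lt_succ hq)]
      rfl

theorem getD_subst (h : LyndonPair w.length (perSeq w) b) {r : List ℕ} {l : ℕ → ℕ}
    (hr : BinaryPair r.length (perSeq r) l) {n : ℕ} (hn : n < w.length * r.length) :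
    (subst w r).getD n 0 =
      substSeq w.length (perSeq w) b (shiftn (r.length - 1) (perSeq r)) n := by
  have hq : n / w.length < r.length := Nat.div_lt_of_lt_mul hn
  have hfirst := hr.first
  have hlast := hr.pred_left_zero
  have hpred : ∀ q < r.length, shiftn (r.length - 1) (perSeq r) (q + 1) = r.getD q 0 :=
    fun q hq => (congrFun hr.shiftn_pred_left q).trans (perSeq_apply hq)
  rw [perSeq_apply hr.pos] at hfirst
  rcases r with _ | ⟨d, r⟩
  · exact absurd hr.pos (Nat.not_lt_zero 0)
  obtain rfl : d = 0 := hfirst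
  rw [substSeq, hpred _ hq]
  conv_lhs => rw [← Nat.div_add_mod' n w.length]
  refine (getD_phiAux h _ _ hq (Nat.mod_lt n h.pos)).trans (congrArg (substDigit _ _ _ · _ _) ?_)
  rcases hdiv : n / w.length with _ | q
  · exact hlast.symm
  · exact (hpred q (by omega)).symm

theorem perSeq_subst (h : LyndonPair w.length (perSeq w) b) {r : List ℕ} {l : ℕ → ℕ}
    (hr : BinaryPair r.length (perSeq r) l) :
    perSeq (subst w r) = substSeq w.length (perSeq w) b (shiftn (r.length - 1) (perSeq r)) := by
  have hlen := length_subst (List.ne_nil_of_length_pos h.pos) r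
  refine perSeq_eq_of_periodic ?_ ?_ fun n hn => getD_subst h hr (hlen ▸ hn)
  · exact hlen.symm ▸ (h.renormalize hr).pos
  · exact hlen.symm ▸ renormalize_left_periodic h hr

theorem wordSeq_wplus_maxCyc (h : LyndonPair w.length (perSeq w) b) :
    wordSeq (wplus (maxCyc w)) (perSeq w) = substSeq w.length (perSeq w) b (headSeq 0 1) := by
  have hw : w ≠ [] := List.ne_nil_of_length_pos h.pos
  have hlen : (wplus (maxCyc w)).length = w.length := length_phiBlock hw 0 1
  funext n
  rw [wordSeq, hlen]
  split_ifs with hn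
  · rw [substSeq_of_lt _ hn]
    exact getD_phiBlock h 0 1 hn
  · obtain ⟨m, rfl⟩ := Nat.exists_eq_add_of_le' (not_lt.mp hn)
    rw [Nat.add_sub_cancel]
    exact (congrFun (shiftn_substSeq_headSeq_one h 0) m).symm

end subst

/-- The iterated product `s 0 • s 1 • … • s n`. -/
def iterSubst (s : ℕ → List ℕ) (n : ℕ) : List ℕ :=
  (List.ofFn fun i : Fin n => s (i + 1)).foldl subst (s 0)

theorem iterSubst_succ (s : ℕ → List ℕ) (n : ℕ) :
    iterSubst s (n + 1) = subst (iterSubst s n) (s (n + 1)) := by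
  rw [iterSubst, List.ofFn_succ_last, List.foldl_append]
  rfl

theorem binaryPair_of_mem_FareySet {w : List ℕ} (h : w ∈ FareySet) :
    BinaryPair w.length (perSeq w) (mech w.sum w.length (w.length - 1)) := by
  obtain ⟨hw, hpos, hlt⟩ := isChristoffel_of_mem_FareySet h
  rw [hw.perSeq_eq]
  exact mech_binaryPair hw.coprime hpos hlt

section iterSubst

variable {s : ℕ → List ℕ}

theorem exists_lyndonPair_iterSubst (hs0 : s 0 ∈ FareyExt) (hs : ∀ k, 1 ≤ k → s k ∈ FareySet)
    (n : ℕ) :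
    ∃ b, LyndonPair (iterSubst s n).length (perSeq (iterSubst s n)) b ∧
      ForcesEvPer (perSeq (iterSubst s n)) b := by
  induction n with
  | zero =>
    obtain ⟨hw, hpos⟩ := isChristoffel_of_mem_FareyExt hs0
    exact ⟨_, hw.lyndonPair hpos, hw.forcesEvPer⟩
  | succ n ih =>
    obtain ⟨b, hb, hforces⟩ := ih
    have hmem := hs (n + 1) (Nat.le_add_left 1 n)
    have hr := binaryPair_of_mem_FareySet hmem
    rw [iterSubst_succ, perSeq_subst hb hr, length_subst (List.ne_nil_of_length_pos hb.pos)]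
    exact ⟨_, hb.renormalize hr,
      hforces.renormalize hb hr (isChristoffel_of_mem_FareySet hmem).1.forcesEvPer⟩

theorem le_length_iterSubst (hs0 : s 0 ∈ FareyExt) (hs : ∀ k, 1 ≤ k → s k ∈ FareySet) (n : ℕ) :
    n ≤ (iterSubst s n).length := by
  induction n with
  | zero => exact Nat.zero_le _
  | succ n ih =>
    obtain ⟨b, hb, -⟩ := exists_lyndonPair_iterSubst hs0 hs n
    have hlen := (binaryPair_of_mem_FareySet (hs (n + 1) (Nat.le_add_left 1 n))).two_le
    rw [iterSubst_succ, length_subst (List.ne_nil_of_length_pos hb.pos)]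
    have hdouble := Nat.mul_le_mul_left (iterSubst s n).length hlen
    have hpos := hb.pos
    omega

end iterSubst

/-! ### Values of digit sequences -/

section valSeq

variable {β : ℝ} {c z y : ℕ → ℕ} {D D' : ℕ}

theorem summable_const_div_pow (hβ : 1 < β) (r : ℝ) : Summable fun i : ℕ => r / β ^ (i + 1) := by
  have hgeom := summable_geometric_of_lt_one (inv_nonneg.mpr (zero_le_one.trans hβ.le))
    (inv_lt_one_of_one_lt₀ hβ)
  refine ((summable_nat_add_iff 1).mpr hgeom).mul_left r |>.congr fun i => ?_
  rw [inv_pow, div_eq_mul_inv]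

theorem summable_digits (hβ : 1 < β) (hc : ∀ i, c i ≤ D) :
    Summable fun i : ℕ => (c i : ℝ) / β ^ (i + 1) := by
  refine Summable.of_nonneg_of_le (fun i => by positivity) (fun i => ?_)
    (summable_const_div_pow hβ D)
  gcongr
  exact hc i

theorem valSeq_nonneg (hβ : 1 < β) (c : ℕ → ℕ) : 0 ≤ valSeq β c :=
  tsum_nonneg fun i => by positivity

theorem valSeq_eq_sum_add (hβ : 1 < β) (hc : ∀ i, c i ≤ D) (n : ℕ) :
    valSeq β c = ∑ i ∈ Finset.range n, (c i : ℝ) / β ^ (i + 1) + valSeq β (shiftn n c) / β ^ n := by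
  rw [valSeq, ← (summable_digits hβ hc).sum_add_tsum_nat_add n, valSeq, ← tsum_div_const]
  congr 1
  refine tsum_congr fun i => ?_
  rw [shiftn_apply, div_div, ← pow_add, add_right_comm]

theorem sum_range_le_valSeq (hβ : 1 < β) (hc : ∀ i, c i ≤ D) (n : ℕ) :
    ∑ i ∈ Finset.range n, (c i : ℝ) / β ^ (i + 1) ≤ valSeq β c :=
  (summable_digits hβ hc).sum_le_tsum _ fun i _ => by positivity

theorem inv_pow_le_valSeq (hβ : 1 < β) (hc : ∀ i, c i ≤ D) {i : ℕ} (hi : 1 ≤ c i) :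
    (β ^ (i + 1))⁻¹ ≤ valSeq β c := by
  refine le_trans ?_ ((summable_digits hβ hc).le_tsum i fun j _ => by positivity)
  rw [← one_div]
  gcongr
  exact_mod_cast hi

theorem valSeq_antitone {β' : ℝ} (hβ : 1 < β) (hβ' : β ≤ β') (hc : ∀ i, c i ≤ D) :
    valSeq β' c ≤ valSeq β c :=
  (summable_digits (hβ.trans_le hβ') hc).tsum_le_tsum (fun i => by gcongr) (summable_digits hβ hc)

theorem valSeq_le_div (hβ : 1 < β) (hc : ∀ i, c i ≤ D) : valSeq β c ≤ D / (β - 1) := by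
  have hconst : ∀ i : ℕ, (fun _ => D) i ≤ D := fun _ => le_rfl
  have hle : valSeq β c ≤ valSeq β fun _ => D :=
    (summable_digits hβ hc).tsum_le_tsum (fun i => by gcongr; exact hc i)
      (summable_digits hβ hconst)
  have heq := valSeq_eq_sum_add hβ hconst 1
  rw [Finset.sum_range_one, zero_add, pow_one, show shiftn 1 (fun _ : ℕ => D) = fun _ => D from rfl,
    ← add_div, eq_div_iff (by positivity)] at heq
  rw [le_div_iff₀ (by linarith)]
  nlinarith

theorem exists_one_le_valSeq (hc : ∀ i, c i ≤ D) {n : ℕ}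
    (hn : 2 ≤ ∑ i ∈ Finset.range n, c i) : ∃ β : ℝ, 1 < β ∧ β ≤ 2 ∧ 1 ≤ valSeq β c := by
  have hcont : ContinuousAt (fun β : ℝ => ∑ i ∈ Finset.range n, (c i : ℝ) / β ^ (i + 1)) 1 := by
    fun_prop (disch := simp)
  have hone : (1 : ℝ) < ∑ i ∈ Finset.range n, (c i : ℝ) / 1 ^ (i + 1) := by
    simp only [one_pow, div_one]
    exact_mod_cast hn
  have hnear :=
    eventually_nhdsWithin_of_eventually_nhds (s := Ioi 1) (hcont.eventually_const_lt hone)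
  obtain ⟨β, hsum, hβ, hβ'⟩ := (hnear.and (Ioc_mem_nhdsGT one_lt_two)).exists
  exact ⟨β, hβ, hβ', hsum.le.trans (sum_range_le_valSeq hβ hc n)⟩

theorem continuousOn_valSeq (hc : ∀ i, c i ≤ D) {β₀ : ℝ} (hβ₀ : 1 < β₀) :
    ContinuousOn (fun β => valSeq β c) (Ici β₀) := by
  have hpos : ∀ β ∈ Ici β₀, 0 < β := fun β hβ => zero_lt_one.trans (hβ₀.trans_le hβ)
  refine continuousOn_tsum (u := fun i => (D : ℝ) / β₀ ^ (i + 1)) (fun i => ?_)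
    (summable_const_div_pow hβ₀ D) fun i β hβ => ?_
  · exact continuousOn_const.div (continuousOn_pow _) fun β hβ => (pow_pos (hpos β hβ) _).ne'
  · have hβpos := hpos β hβ
    rw [Real.norm_of_nonneg (by positivity)]
    gcongr
    exacts [hc i, hβ]

theorem exists_valSeq_eq_one (hc : ∀ i, c i ≤ D) (hinf : ∀ n, ∃ i, n ≤ i ∧ 1 ≤ c i) :
    ∃ β : ℝ, 1 < β ∧ valSeq β c = 1 := by
  obtain ⟨i, -, hi⟩ := hinf 0
  obtain ⟨j, hij, hj⟩ := hinf (i + 1)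
  have hsum : 2 ≤ ∑ k ∈ Finset.range (j + 1), c k := by
    have hle := Finset.single_le_sum (f := c) (fun k _ => Nat.zero_le _)
      (Finset.mem_range.mpr (show i < j by omega))
    rw [Finset.sum_range_succ]
    omega
  obtain ⟨β₀, h1, h2, hlow⟩ := exists_one_le_valSeq hc hsum
  have : (0 : ℝ) ≤ D := Nat.cast_nonneg D
  have hupp : valSeq (D + 2) c ≤ 1 :=
    (valSeq_le_div (by linarith) hc).trans ((div_le_one₀ (by linarith)).mpr (by linarith))
  have hcont : ContinuousOn (fun β => valSeq β c) (Icc β₀ (D + 2)) :=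
    (continuousOn_valSeq hc h1).mono fun β hβ => hβ.1
  obtain ⟨β, hβ, hval⟩ := intermediate_value_Icc' (by linarith) hcont ⟨hupp, hlow⟩
  exact ⟨β, h1.trans_le hβ.1, hval⟩

theorem valSeq_add_div_le_of_first_difference (hβ : 1 < β) (hz : ∀ i, z i ≤ D)
    (hy : ∀ i, y i ≤ D') {k : ℕ} (hagree : ∀ i < k, z i = y i) (hlt : z k < y k) :
    valSeq β z + (1 - valSeq β (shiftn (k + 1) z) + valSeq β (shiftn (k + 1) y)) / β ^ (k + 1) ≤
      valSeq β y := by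
  have hsum : ∑ i ∈ Finset.range k, (z i : ℝ) / β ^ (i + 1) =
      ∑ i ∈ Finset.range k, (y i : ℝ) / β ^ (i + 1) :=
    Finset.sum_congr rfl fun i hi => by rw [hagree i (Finset.mem_range.mp hi)]
  have hdigit : ((z k : ℝ) + 1) / β ^ (k + 1) ≤ y k / β ^ (k + 1) := by
    gcongr
    exact_mod_cast hlt
  rw [valSeq_eq_sum_add hβ hz (k + 1), valSeq_eq_sum_add hβ hy (k + 1), Finset.sum_range_succ,
    Finset.sum_range_succ, hsum]
  rw [add_div] at hdigit
  rw [add_div, sub_div]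
  linarith

theorem valSeq_le_of_le (hβ : 1 < β) (hz : ∀ i, z i ≤ D) (hy : ∀ i, y i ≤ D')
    (hzy : toLex z ≤ toLex y) (htail : ∀ n, 1 ≤ n → valSeq β (shiftn n z) ≤ 1) :
    valSeq β z ≤ valSeq β y := by
  rcases hzy.lt_or_eq with ⟨k, hagree, hlt⟩ | heq
  · have hgap := valSeq_add_div_le_of_first_difference hβ hz hy hagree hlt
    have hz1 := htail (k + 1) (Nat.le_add_left 1 k)
    have hy0 := valSeq_nonneg hβ (shiftn (k + 1) y)
    refine le_trans (le_add_of_nonneg_right (div_nonneg ?_ ?_)) hgap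
    exacts [by linarith, by positivity]
  · rw [toLex_inj.mp heq]

theorem valSeq_lt_of_lt (hβ : 1 < β) (hz : ∀ i, z i ≤ D) (hy : ∀ i, y i ≤ D')
    (hzy : toLex z < toLex y) (htail : ∀ n, 1 ≤ n → valSeq β (shiftn n z) ≤ 1)
    (hpos : ∀ n, 0 < valSeq β (shiftn n y)) : valSeq β z < valSeq β y := by
  obtain ⟨k, hagree, hlt⟩ := hzy
  have hgap := valSeq_add_div_le_of_first_difference hβ hz hy hagree hlt
  have hz1 := htail (k + 1) (Nat.le_add_left 1 k)
  have hy0 := hpos (k + 1)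
  refine lt_of_lt_of_le (lt_add_of_pos_right _ (div_pos ?_ ?_)) hgap
  exacts [by linarith, by positivity]

theorem sum_range_le_valSeq_of_takeSeq_le (hβ : 1 < β) (hz : ∀ i, z i ≤ D) (hy : ∀ i, y i ≤ D')
    {N : ℕ} (hzy : takeSeq N z ≤ takeSeq N y)
    (htail : ∀ n, 1 ≤ n → valSeq β (shiftn n z) ≤ 1) :
    ∑ i ∈ Finset.range N, (z i : ℝ) / β ^ (i + 1) ≤ valSeq β y := by
  rcases hzy.lt_or_eq with hlt | heq
  · exact (sum_range_le_valSeq hβ hz N).trans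
      (valSeq_le_of_le hβ hz hy (lt_of_takeSeq_lt hlt).le htail)
  · rw [takeSeq_eq_iff] at heq
    rw [Finset.sum_congr rfl fun i hi => by rw [heq i (Finset.mem_range.mp hi)]]
    exact sum_range_le_valSeq hβ hy N

theorem valSeq_sub_one_le_div (hβ : 1 < β) (hz : ∀ i, z i ≤ D) (hy : ∀ i, y i ≤ D')
    (hzy : toLex z ≤ toLex y) (hval : valSeq β y ≤ 1) {E : ℝ} (hE : 0 ≤ E)
    (htail : ∀ n, valSeq β (shiftn n z) - 1 ≤ E) : valSeq β z - 1 ≤ E / β := by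
  rcases hzy.lt_or_eq with ⟨k, hagree, hlt⟩ | heq
  · have hgap := valSeq_add_div_le_of_first_difference hβ hz hy hagree hlt
    have hfirst : -E / β ^ (k + 1) ≤
        (1 - valSeq β (shiftn (k + 1) z) + valSeq β (shiftn (k + 1) y)) / β ^ (k + 1) := by
      gcongr
      linarith [htail (k + 1), valSeq_nonneg hβ (shiftn (k + 1) y)]
    have hpow : E / β ^ (k + 1) ≤ E / β := by
      gcongr
      exact le_self_pow₀ hβ.le (Nat.succ_ne_zero k)
    rw [neg_div] at hfirst
    linarith
  · rw [toLex_inj.mp heq]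
    have : 0 ≤ E / β := by positivity
    linarith

theorem valSeq_shiftn_le_one (hβ : 1 < β) (hz : ∀ i, z i ≤ D) (hy : ∀ i, y i ≤ D')
    (hzy : ∀ n, toLex (shiftn n z) ≤ toLex y) (hval : valSeq β y ≤ 1) (n : ℕ) :
    valSeq β (shiftn n z) ≤ 1 := by
  set E := ⨆ m, (valSeq β (shiftn m z) - 1)
  have hbdd : BddAbove (range fun m => valSeq β (shiftn m z) - 1) := by
    refine ⟨D / (β - 1) - 1, ?_⟩
    rintro - ⟨m, rfl⟩
    exact sub_le_sub_right (valSeq_le_div hβ fun i => hz (i + m)) 1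
  have hle : ∀ m, valSeq β (shiftn m z) - 1 ≤ E := le_ciSup hbdd
  by_contra! hlt
  have hE : 0 < E := (sub_pos.mpr hlt).trans_le (hle n)
  have hcontract : E ≤ E / β := by
    refine ciSup_le fun m => valSeq_sub_one_le_div hβ (z := shiftn m z) (fun i => hz _) hy (hzy m)
      hval hE.le fun k => ?_
    rw [shiftn_shiftn]
    exact hle _
  exact hcontract.not_gt (div_lt_self hE hβ)

end valSeq

/-! ### Bases in `J^S` -/

namespace LyndonPair

variable {N : ℕ} {a b : ℕ → ℕ}

theorem exists_substSeq_le (h : LyndonPair N a b) : ∃ D, ∀ c i, substSeq N a b c i ≤ D := by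
  have ha : ∀ i, a i ≤ ∑ k ∈ Finset.range N, a k := fun i => by
    rw [← h.per.map_mod_nat]
    exact Finset.single_le_sum (f := a) (fun k _ => Nat.zero_le _)
      (Finset.mem_range.mpr (Nat.mod_lt _ h.pos))
  have hb : ∀ i, b i ≤ ∑ k ∈ Finset.range N, a k := by
    obtain ⟨j, rfl⟩ := h.rot
    exact fun i => ha _
  refine ⟨∑ k ∈ Finset.range N, a k + 1, fun c i => ?_⟩
  have ha' := ha (i % N)
  have hb' := hb (i % N)
  rw [substSeq, substDigit]
  split_ifs <;> omega

theorem exists_pos_left (h : LyndonPair N a b) (n : ℕ) : ∃ i, n ≤ i ∧ 1 ≤ a i :=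
  ⟨N - 1 + n * N, (Nat.le_mul_of_pos_right n h.pos).trans (Nat.le_add_left _ _),
    (h.per.nat_mul n (N - 1)).symm ▸ h.last⟩

theorem exists_pos_right (h : LyndonPair N a b) (n : ℕ) : ∃ i, n ≤ i ∧ 1 ≤ b i := by
  obtain ⟨j, rfl⟩ := h.rot
  obtain ⟨i, hi, hpos⟩ := h.exists_pos_left (n + j)
  refine ⟨i - j, by omega, ?_⟩
  rwa [shiftn_apply, Nat.sub_add_cancel (by omega)]

theorem right_zero_pos (h : LyndonPair N a b) : 1 ≤ b 0 := by
  by_contra! hzero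
  refine (h.max (N - 1)).not_gt ⟨0, fun j hj => absurd hj (Nat.not_lt_zero j), ?_⟩
  change b 0 < shiftn (N - 1) a 0
  rw [shiftn_apply_zero]
  exact hzero.trans_le h.last

theorem exists_pos_substSeq_headSeq (h : LyndonPair N a b) (n : ℕ) :
    ∃ i, n ≤ i ∧ 1 ≤ substSeq N a b (headSeq 0 1) i := by
  obtain ⟨i, hi, hpos⟩ := h.exists_pos_left n
  refine ⟨i + N, by omega, ?_⟩
  rwa [← shiftn_apply N (substSeq N a b (headSeq 0 1)), shiftn_substSeq_headSeq_one h]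

end LyndonPair

section Jint

variable {w : List ℕ} {b : ℕ → ℕ} {β : ℝ}

theorem betaL_spec (h : LyndonPair w.length (perSeq w) b) :
    1 < betaL w ∧ valSeq (betaL w) b = 1 := by
  obtain ⟨D, hD⟩ := h.exists_substSeq_le
  rw [betaL, perSeq_maxCyc h]
  exact Classical.epsilon_spec (p := fun β : ℝ => 1 < β ∧ valSeq β b = 1)
    (exists_valSeq_eq_one (substSeq_const_zero h ▸ hD fun _ => 0) h.exists_pos_right)

theorem betaR_spec (h : LyndonPair w.length (perSeq w) b) :
    1 < betaR w ∧ valSeq (betaR w) (substSeq w.length (perSeq w) b (headSeq 0 1)) = 1 := by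
  obtain ⟨D, hD⟩ := h.exists_substSeq_le
  rw [betaR, wordSeq_wplus_maxCyc h]
  exact Classical.epsilon_spec
    (p := fun β : ℝ => 1 < β ∧ valSeq β (substSeq w.length (perSeq w) b (headSeq 0 1)) = 1)
    (exists_valSeq_eq_one (hD _) h.exists_pos_substSeq_headSeq)

theorem one_lt_of_mem_Jint (h : LyndonPair w.length (perSeq w) b) (hβ : β ∈ Jint w) : 1 < β :=
  (betaL_spec h).1.trans_le hβ.1

theorem valSeq_right_le_one_of_mem_Jint (h : LyndonPair w.length (perSeq w) b)
    (hβ : β ∈ Jint w) : valSeq β b ≤ 1 := by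
  obtain ⟨D, hD⟩ := h.exists_substSeq_le
  obtain ⟨hβL, hval⟩ := betaL_spec h
  exact (valSeq_antitone hβL hβ.1 (substSeq_const_zero h ▸ hD fun _ => 0)).trans_eq hval

theorem one_le_valSeq_of_mem_Jint (h : LyndonPair w.length (perSeq w) b) (hβ : β ∈ Jint w) :
    1 ≤ valSeq β (substSeq w.length (perSeq w) b (headSeq 0 1)) := by
  obtain ⟨D, hD⟩ := h.exists_substSeq_le
  exact (betaR_spec h).2.symm.trans_le
    (valSeq_antitone (one_lt_of_mem_Jint h hβ) hβ.2 (hD _))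

end Jint

/-! ### Greedy expansions and the upper bound -/

/-- The digits `⌊β T_β^i(x)⌋` of the greedy expansion of `x` in base `β`. -/
noncomputable def greedyDigit (β x : ℝ) (i : ℕ) : ℕ := ⌊β * (Tbeta β)^[i] x⌋₊

section greedyDigit

variable {β x : ℝ}

theorem shiftn_greedyDigit (β x : ℝ) (n : ℕ) :
    shiftn n (greedyDigit β x) = greedyDigit β ((Tbeta β)^[n] x) := by
  funext i
  rw [shiftn_apply, greedyDigit, greedyDigit, Function.iterate_add_apply]

theorem iterate_Tbeta_mem_Ico (hx : x ∈ Ico (0 : ℝ) 1) (n : ℕ) :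
    (Tbeta β)^[n] x ∈ Ico (0 : ℝ) 1 := by
  rcases n with _ | n
  · exact hx
  · rw [Function.iterate_succ_apply']
    exact ⟨Int.fract_nonneg _, Int.fract_lt_one _⟩

theorem greedyDigit_le (hβ : 1 < β) (hx : x ∈ Ico (0 : ℝ) 1) (i : ℕ) :
    greedyDigit β x i ≤ ⌊β⌋₊ :=
  Nat.floor_le_floor (mul_le_of_le_one_right (by positivity) (iterate_Tbeta_mem_Ico hx i).2.le)

theorem mul_eq_greedyDigit_add (hβ : 1 < β) (hx : x ∈ Ico (0 : ℝ) 1) :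
    β * x = greedyDigit β x 0 + Tbeta β x := by
  have hnonneg : 0 ≤ β * x := mul_nonneg (by positivity) hx.1
  rw [greedyDigit, Function.iterate_zero_apply, natCast_floor_eq_intCast_floor hnonneg, Tbeta,
    Int.floor_add_fract]

theorem eq_sum_greedyDigit_add (hβ : 1 < β) (hx : x ∈ Ico (0 : ℝ) 1) (n : ℕ) :
    x = ∑ i ∈ Finset.range n, (greedyDigit β x i : ℝ) / β ^ (i + 1) + (Tbeta β)^[n] x / β ^ n := by
  induction n with
  | zero => simp
  | succ n ih =>
    have hstep := mul_eq_greedyDigit_add hβ (iterate_Tbeta_mem_Ico (β := β) hx n)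
    rw [← shiftn_greedyDigit, shiftn_apply_zero, ← Function.iterate_succ_apply' (Tbeta β)] at hstep
    rw [Finset.sum_range_succ, add_assoc, ← add_div, ← hstep, pow_succ',
      mul_div_mul_left _ _ (by positivity)]
    exact ih

theorem valSeq_greedyDigit (hβ : 1 < β) (hx : x ∈ Ico (0 : ℝ) 1) :
    valSeq β (greedyDigit β x) = x := by
  have hpow : Tendsto (fun n : ℕ => β⁻¹ ^ n) atTop (𝓝 0) :=
    tendsto_pow_atTop_nhds_zero_of_lt_one (by positivity) (inv_lt_one_of_one_lt₀ hβ)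
  have hrem : Tendsto (fun n : ℕ => (Tbeta β)^[n] x / β ^ n) atTop (𝓝 0) := by
    refine squeeze_zero (fun n => div_nonneg (iterate_Tbeta_mem_Ico hx n).1 (by positivity))
      (fun n => ?_) hpow
    rw [inv_pow, div_eq_mul_inv]
    exact mul_le_of_le_one_left (by positivity) (iterate_Tbeta_mem_Ico hx n).2.le
  refine HasSum.tsum_eq ((hasSum_iff_tendsto_nat_of_nonneg (fun i => by positivity) _).mpr ?_)
  have hsum := hrem.const_sub x
  rw [sub_zero] at hsum
  exact hsum.congr fun n => sub_eq_of_eq_add (eq_sum_greedyDigit_add hβ hx n)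

theorem takeSeq_le_greedyDigit (hβ : 1 < β) (hx : x ∈ Ico (0 : ℝ) 1) {a : ℕ → ℕ} {N : ℕ}
    (h : ∑ i ∈ Finset.range N, (a i : ℝ) / β ^ (i + 1) ≤ x) :
    takeSeq N a ≤ takeSeq N (greedyDigit β x) := by
  refine not_lt.mp fun hlt => h.not_gt ?_
  obtain ⟨k, hk, hagree, hlt⟩ := takeSeq_lt_iff.mp hlt
  have hdigit : ((greedyDigit β x k : ℝ) + 1) / β ^ (k + 1) ≤ a k / β ^ (k + 1) := by
    gcongr
    exact_mod_cast hlt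
  have hrem : (Tbeta β)^[k + 1] x / β ^ (k + 1) < 1 / β ^ (k + 1) := by
    gcongr
    exact (iterate_Tbeta_mem_Ico hx (k + 1)).2
  have hsum : ∑ i ∈ Finset.range k, (a i : ℝ) / β ^ (i + 1) =
      ∑ i ∈ Finset.range k, (greedyDigit β x i : ℝ) / β ^ (i + 1) :=
    Finset.sum_congr rfl fun i hi => by rw [hagree i (Finset.mem_range.mp hi)]
  calc x = ∑ i ∈ Finset.range k, (a i : ℝ) / β ^ (i + 1) + greedyDigit β x k / β ^ (k + 1) +
        (Tbeta β)^[k + 1] x / β ^ (k + 1) := by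
        rw [hsum, ← Finset.sum_range_succ]
        exact eq_sum_greedyDigit_add hβ hx (k + 1)
    _ < ∑ i ∈ Finset.range (k + 1), (a i : ℝ) / β ^ (i + 1) := by
        rw [Finset.sum_range_succ]
        rw [add_div] at hdigit
        linarith
    _ ≤ ∑ i ∈ Finset.range N, (a i : ℝ) / β ^ (i + 1) :=
        Finset.sum_le_sum_of_subset_of_nonneg (Finset.range_mono hk) fun i _ _ => by positivity

end greedyDigit

section countable

variable {N : ℕ} {a b : ℕ → ℕ} {β : ℝ}

theorem shiftn_substSeq_headSeq_zero_one_le_right (h : LyndonPair N a b) {n : ℕ} (hn : 1 ≤ n) :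
    toLex (shiftn n (substSeq N a b (headSeq 0 1))) ≤ toLex b := by
  refine le_of_forall_takeSeq_shiftn_le h.pos h.per_right fun q => ?_
  rw [shiftn_shiftn]
  refine takeSeq_shiftn_substSeq_le_right h (fun i => ?_) ?_
  · rw [headSeq]
    split_ifs <;> simp
  · refine or_iff_not_imp_left.mpr fun hmod => if_neg fun hdiv => ?_
    have hsplit := Nat.div_add_mod' (n + q * N) N
    rw [hdiv, not_not.mp hmod] at hsplit
    omega

theorem le_substSeq_headSeq_of_valSeq_lt_one (h : LyndonPair N a b) (hβ : 1 < β)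
    (hb : valSeq β b ≤ 1) (hr : 1 ≤ valSeq β (substSeq N a b (headSeq 0 1))) {y : ℕ → ℕ} {D : ℕ}
    (hy : ∀ i, y i ≤ D) (hval : valSeq β y < 1) :
    toLex y ≤ toLex (substSeq N a b (headSeq 0 1)) := by
  obtain ⟨D', hD⟩ := h.exists_substSeq_le
  refine le_of_not_gt fun hlt => (hval.trans_le hr).not_ge ?_
  refine valSeq_le_of_le hβ (hD _) hy hlt.le fun n hn => ?_
  obtain ⟨m, rfl⟩ := Nat.exists_eq_add_of_le hn
  rw [← shiftn_shiftn]
  refine valSeq_shiftn_le_one hβ (z := shiftn 1 (substSeq N a b (headSeq 0 1)))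
    (fun i => hD _ _) (substSeq_const_zero h ▸ hD fun _ => 0)
    (fun k => ?_) hb m
  rw [shiftn_shiftn]
  exact shiftn_substSeq_headSeq_zero_one_le_right h (Nat.le_add_right 1 k)

theorem countable_survivor (h : LyndonPair N a b) (hforces : ForcesEvPer a b) (hβ : 1 < β)
    (hb : valSeq β b ≤ 1) (hr : 1 ≤ valSeq β (substSeq N a b (headSeq 0 1))) :
    (survivor β (∑ i ∈ Finset.range N, (a i : ℝ) / β ^ (i + 1))).Countable := by
  refine (countable_evPer.image (valSeq β)).mono fun x hx => ?_
  have hmem := fun i => iterate_Tbeta_mem_Ico (β := β) hx.1 i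
  refine ⟨greedyDigit β x, hforces.relax h (fun i => ?_) fun i => ?_, valSeq_greedyDigit hβ hx.1⟩
  · refine le_of_forall_takeSeq_le_shiftn h.pos h.per fun q => ?_
    rw [shiftn_shiftn, shiftn_greedyDigit]
    exact takeSeq_le_greedyDigit hβ (hmem _) (hx.2 _)
  · rw [shiftn_greedyDigit]
    refine le_substSeq_headSeq_of_valSeq_lt_one h hβ hb hr (greedyDigit_le hβ (hmem i)) ?_
    rw [valSeq_greedyDigit hβ (hmem i)]
    exact (hmem i).2

end countable

/-! ### A Cantor set in the survivor set -/

/-- The binary sequence with the digits `ω` at the positive multiples of `m`, and `0` elsewhere. -/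
def sparse (m : ℕ) (ω : ℕ → Fin 2) (q : ℕ) : ℕ :=
  if q = 0 ∨ q % m ≠ 0 then 0 else ω (q / m - 1)

section sparse

variable {m : ℕ} {ω ω' : ℕ → Fin 2}

theorem sparse_le_one (m : ℕ) (ω : ℕ → Fin 2) (q : ℕ) : sparse m ω q ≤ 1 := by
  rw [sparse]
  split_ifs
  exacts [Nat.zero_le _, Nat.le_of_lt_succ (ω _).isLt]

theorem sparse_of_mod_ne_zero (ω : ℕ → Fin 2) {q : ℕ} (hq : q % m ≠ 0) : sparse m ω q = 0 :=
  if_pos (Or.inr hq)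

theorem sparse_add_of_mod_eq_zero (ω : ℕ → Fin 2) {q i : ℕ} (hq : q % m = 0) (hi : 0 < i)
    (him : i < m) : sparse m ω (i + q) = 0 := by
  refine sparse_of_mod_ne_zero ω ?_
  rw [Nat.add_mod, hq, add_zero, Nat.mod_mod, Nat.mod_eq_of_lt him]
  exact hi.ne'

theorem sparse_mul_succ (hm : 0 < m) (ω : ℕ → Fin 2) (j : ℕ) : sparse m ω (m * (j + 1)) = ω j := by
  have hpos : m * (j + 1) ≠ 0 := (Nat.mul_pos hm (Nat.succ_pos j)).ne'
  rw [sparse, if_neg (by simp only [hpos, Nat.mul_mod_right, ne_eq, not_true, or_false,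
    not_false_eq_true]), Nat.mul_div_cancel_left _ hm, Nat.add_sub_cancel]

theorem sparse_congr {j : ℕ} (h : ∀ i < j, ω i = ω' i) {q : ℕ} (hq : q < m * (j + 1)) :
    sparse m ω q = sparse m ω' q := by
  rw [sparse, sparse]
  split_ifs with hzero
  · rfl
  · push Not at hzero
    have hpos : 0 < q / m := Nat.div_pos
      (Nat.le_of_dvd (Nat.pos_of_ne_zero hzero.1) (Nat.dvd_of_mod_eq_zero hzero.2))
      (Nat.pos_of_mul_pos_right (Nat.zero_lt_of_lt hq))
    have hlt : q / m < j + 1 := Nat.div_lt_of_lt_mul hq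
    rw [h _ (by omega)]

theorem shiftn_sparse_lt {M : ℕ} {r l : ℕ → ℕ} (hr : BinaryPair M r l) (ω : ℕ → Fin 2) (q : ℕ) :
    toLex (shiftn q (sparse (M + 1) ω)) < toLex l := by
  have hM := hr.pos
  rcases Nat.le_one_iff_eq_zero_or_eq_one.mp (sparse_le_one (M + 1) ω q) with h0 | h1
  · refine ⟨0, fun i hi => absurd hi (Nat.not_lt_zero i), ?_⟩
    change shiftn q (sparse (M + 1) ω) 0 < l 0
    rw [shiftn_apply_zero, h0, hr.first_right]
    exact one_pos
  · have hq : q % (M + 1) = 0 :=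
      not_not.mp fun hq => zero_ne_one ((sparse_of_mod_ne_zero ω hq).symm.trans h1)
    have hM1 : l M = 1 := by
      rw [← hr.first_right, ← hr.per_right 0, zero_add]
    refine lt_of_takeSeq_lt (N := M + 1) (Pi.toLex_strictMono (Pi.lt_def.mpr ⟨fun i => ?_, ?_⟩))
    · change sparse (M + 1) ω (i + q) ≤ l i
      rcases Nat.eq_zero_or_pos (i : ℕ) with hi | hi
      · rw [hi, hr.first_right]
        exact sparse_le_one _ _ _
      · rw [sparse_add_of_mod_eq_zero ω hq hi i.isLt]
        exact Nat.zero_le _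
    · refine ⟨Fin.last M, ?_⟩
      change sparse (M + 1) ω (M + q) < l M
      rw [sparse_add_of_mod_eq_zero ω hq hM M.lt_succ_self, hM1]
      exact one_pos

end sparse

section cantor

variable {N M : ℕ} {a b r l c c' : ℕ → ℕ} {β : ℝ} {ω ω' : ℕ → Fin 2}

theorem shiftn_substSeq_sparse_lt (h : LyndonPair N a b) (hr : BinaryPair M r l)
    (ω : ℕ → Fin 2) (n : ℕ) :
    toLex (shiftn n (substSeq N a b (sparse (M + 1) ω))) <
      toLex (substSeq N a b (shiftn (M - 1) l)) := by
  by_cases hn : n % N ≠ 0 ∨ sparse (M + 1) ω (n / N) = 1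
  · exact lt_of_takeSeq_lt
      ((takeSeq_shiftn_substSeq_le_right h (sparse_le_one (M + 1) ω) hn).trans_lt
        (takeSeq_covBy_substSeq h hr.pred_right_zero hr.pred_right_one).lt)
  · push Not at hn
    have hzero : sparse (M + 1) ω (n / N) = 0 :=
      (Nat.le_one_iff_eq_zero_or_eq_one.mp (sparse_le_one _ _ _)).resolve_right hn.2
    rw [← Nat.div_add_mod' n N, hn.1, add_zero, shiftn_mul_substSeq h.pos]
    refine substSeq_lt h ?_ (fun i => hr.right_le_one _) ?_
    · rw [hr.pred_right_zero, shiftn_apply_zero, hzero]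
    · rw [hr.shiftn_pred_right, shiftn_shiftn]
      exact shiftn_sparse_lt hr ω _

theorem valSeq_shiftn_substSeq_sparse_lt_one (h : LyndonPair N a b) (hr : BinaryPair M r l)
    (hβ : 1 < β) (hval : valSeq β (substSeq N a b (shiftn (M - 1) l)) ≤ 1) (ω : ℕ → Fin 2)
    (n : ℕ) : valSeq β (shiftn n (substSeq N a b (sparse (M + 1) ω))) < 1 := by
  obtain ⟨D, hD⟩ := h.exists_substSeq_le
  have htail := valSeq_shiftn_le_one hβ (hD _) (hD _)
    (fun n => (shiftn_substSeq_sparse_lt h hr ω n).le) hval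
  have hpos : ∀ k, 0 < valSeq β (shiftn k (substSeq N a b (shiftn (M - 1) l))) := fun k => by
    obtain ⟨i, hki, hi⟩ := (h.renormalize hr).exists_pos_right k
    obtain ⟨j, rfl⟩ := Nat.exists_eq_add_of_le' hki
    exact (by positivity : 0 < (β ^ (j + 1))⁻¹).trans_le
      (inv_pow_le_valSeq hβ (c := shiftn k (substSeq N a b (shiftn (M - 1) l)))
        (fun i => hD _ _) hi)
  refine (valSeq_lt_of_lt hβ (z := shiftn n (substSeq N a b (sparse (M + 1) ω)))
    (fun i => hD _ _) (hD _) (shiftn_substSeq_sparse_lt h hr ω n) (fun k _ => ?_) hpos).trans_le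
    hval
  rw [shiftn_shiftn]
  exact htail _

theorem takeSeq_substSeq_headSeq_le_shiftn (h : LyndonPair N a b) (hc : ∀ i, c i ≤ 1) (n : ℕ) :
    takeSeq N (substSeq N a b (headSeq 1 0)) ≤ takeSeq N (shiftn n (substSeq N a b c)) := by
  have hlt : takeSeq N (substSeq N a b (headSeq 1 0)) < takeSeq N a :=
    (takeSeq_substSeq_covBy h rfl rfl).lt
  by_cases hn : n % N ≠ 0 ∨ c (n / N) = 0
  · exact hlt.le.trans (takeSeq_left_le_shiftn_substSeq h hc hn)
  · push Not at hn
    have hone : shiftn (n / N) c 0 = 1 := by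
      rw [shiftn_apply_zero]
      exact (Nat.le_one_iff_eq_zero_or_eq_one.mp (hc _)).resolve_left hn.2
    rw [← Nat.div_add_mod' n N, hn.1, add_zero, shiftn_mul_substSeq h.pos]
    rcases Nat.le_one_iff_eq_zero_or_eq_one.mp (hc (1 + n / N)) with h0 | h1
    · exact (takeSeq_shiftn_substSeq_congr 0 hone.symm h0.symm).le
    · rw [takeSeq_substSeq_eq_left h hone h1]
      exact hlt.le

theorem shiftn_substSeq_headSeq_one_zero_le_right (h : LyndonPair N a b) {n : ℕ} (hn : 1 ≤ n) :
    toLex (shiftn n (substSeq N a b (headSeq 1 0))) ≤ toLex b := by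
  refine le_of_forall_takeSeq_shiftn_le h.pos h.per_right fun q => ?_
  rw [shiftn_shiftn]
  by_cases hmod : (n + q * N) % N = 0
  · obtain ⟨p, hp⟩ := Nat.dvd_of_mod_eq_zero hmod
    obtain ⟨p, rfl⟩ : ∃ p', p = p' + 1 := Nat.exists_eq_succ_of_ne_zero fun h0 => by
      rw [h0] at hp
      omega
    rw [hp, mul_comm, shiftn_mul_substSeq h.pos, takeSeq_substSeq_eq_right h rfl rfl]
  · refine takeSeq_shiftn_substSeq_le_right h (fun i => ?_) (Or.inl hmod)
    rw [headSeq]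
    split_ifs <;> simp

theorem sum_substSeq_headSeq_one_zero (h : LyndonPair N a b) (β : ℝ) :
    ∑ i ∈ Finset.range N, (substSeq N a b (headSeq 1 0) i : ℝ) / β ^ (i + 1) =
      ∑ i ∈ Finset.range N, (a i : ℝ) / β ^ (i + 1) - (β ^ N)⁻¹ := by
  obtain ⟨hagree, hlast⟩ := substSeq_first_difference h (k := 0) (c := headSeq 1 0)
    (c' := fun _ => 1) (fun i hi => by rw [Nat.le_zero.mp hi, headSeq_zero]) rfl rfl
  rw [substSeq_const_one h, zero_mul, zero_add] at hagree hlast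
  obtain ⟨K, rfl⟩ : ∃ K, N = K + 1 := Nat.exists_eq_succ_of_ne_zero h.pos.ne'
  rw [Nat.add_sub_cancel] at hagree hlast
  rw [Finset.sum_range_succ, Finset.sum_range_succ, hlast,
    Finset.sum_congr rfl fun i hi => by rw [hagree i (Finset.mem_range.mp hi)]]
  push_cast
  ring

theorem sum_sub_inv_le_valSeq_shiftn_substSeq (h : LyndonPair N a b) (hβ : 1 < β)
    (hb : valSeq β b ≤ 1) (hc : ∀ i, c i ≤ 1) (n : ℕ) :
    ∑ i ∈ Finset.range N, (a i : ℝ) / β ^ (i + 1) - (β ^ N)⁻¹ ≤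
      valSeq β (shiftn n (substSeq N a b c)) := by
  obtain ⟨D, hD⟩ := h.exists_substSeq_le
  rw [← sum_substSeq_headSeq_one_zero h]
  refine sum_range_le_valSeq_of_takeSeq_le hβ (hD _) (y := shiftn n (substSeq N a b c))
    (fun i => hD _ _) (takeSeq_substSeq_headSeq_le_shiftn h hc n) fun m hm => ?_
  obtain ⟨k, rfl⟩ := Nat.exists_eq_add_of_le hm
  rw [← shiftn_shiftn]
  refine valSeq_shiftn_le_one hβ (z := shiftn 1 (substSeq N a b (headSeq 1 0)))
    (fun i => hD _ _) (substSeq_const_zero h ▸ hD fun _ => 0) (fun i => ?_) hb k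
  rw [shiftn_shiftn]
  exact shiftn_substSeq_headSeq_one_zero_le_right h (Nat.le_add_right 1 i)

theorem iterate_Tbeta_valSeq (hβ : 1 < β) {D : ℕ} (hc : ∀ i, c i ≤ D)
    (hlt : ∀ n, valSeq β (shiftn n c) < 1) (n : ℕ) :
    (Tbeta β)^[n] (valSeq β c) = valSeq β (shiftn n c) := by
  induction n with
  | zero => rfl
  | succ n ih =>
    have hmul : β * valSeq β (shiftn n c) = valSeq β (shiftn (n + 1) c) + (c n : ℕ) := by
      rw [valSeq_eq_sum_add hβ (c := shiftn n c) (fun i => hc _) 1, shiftn_shiftn,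
        Finset.sum_range_one, shiftn_apply_zero, zero_add, pow_one]
      field_simp
      ring
    rw [Function.iterate_succ_apply', ih, Tbeta, hmul, Int.fract_add_natCast,
      Int.fract_eq_self.mpr ⟨valSeq_nonneg hβ _, hlt _⟩]

theorem valSeq_substSeq_sparse_mem_survivor (h : LyndonPair N a b) (hr : BinaryPair M r l)
    (hβ : 1 < β) (hb : valSeq β b ≤ 1)
    (hval : valSeq β (substSeq N a b (shiftn (M - 1) l)) ≤ 1) (ω : ℕ → Fin 2) :
    valSeq β (substSeq N a b (sparse (M + 1) ω)) ∈
      survivor β (∑ i ∈ Finset.range N, (a i : ℝ) / β ^ (i + 1) - (β ^ N)⁻¹) := by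
  obtain ⟨D, hD⟩ := h.exists_substSeq_le
  have hlt := valSeq_shiftn_substSeq_sparse_lt_one h hr hβ hval ω
  refine ⟨⟨valSeq_nonneg hβ _, hlt 0⟩, fun n => ?_⟩
  rw [iterate_Tbeta_valSeq hβ (hD _) hlt]
  exact sum_sub_inv_le_valSeq_shiftn_substSeq h hβ hb (sparse_le_one _ ω) n

theorem inv_pow_le_valSeq_shiftn_substSeq (h : LyndonPair N a b) (hβ : 1 < β) {q : ℕ}
    (h1 : c (q + 1) = 0) (h2 : c (q + 2) = 0) :
    (β ^ (N + 1))⁻¹ ≤ valSeq β (shiftn (q * N) (substSeq N a b c)) := by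
  obtain ⟨D, hD⟩ := h.exists_substSeq_le
  refine inv_pow_le_valSeq hβ (c := shiftn (q * N) (substSeq N a b c)) (fun i => hD _ _) ?_
  have hletter : shiftn (q * N) (substSeq N a b c) N = b 0 := by
    rw [shiftn_apply, show N + q * N = (q + 1) * N + 0 by ring, substSeq_mul_add c _ h.pos,
      substDigit, if_pos h2, if_pos h1]
  exact hletter ▸ h.right_zero_pos

theorem valSeq_substSeq_add_div_le (h : LyndonPair N a b) (hβ : 1 < β) {q : ℕ}
    (hagree : ∀ i ≤ q, c i = c' i) (hc : c (q + 1) = 0) (hc' : c' (q + 1) = 1)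
    (htail : valSeq β (shiftn ((q + 1) * N) (substSeq N a b c)) ≤ 1) :
    valSeq β (substSeq N a b c) +
      valSeq β (shiftn ((q + 1) * N) (substSeq N a b c')) / β ^ ((q + 1) * N) ≤
        valSeq β (substSeq N a b c') := by
  obtain ⟨D, hD⟩ := h.exists_substSeq_le
  have hN := h.pos
  obtain ⟨hsame, hdiff⟩ := substSeq_first_difference h hagree hc hc'
  have hgap := valSeq_add_div_le_of_first_difference hβ (hD c) (hD c') hsame
    ((Nat.lt_succ_self _).trans_eq hdiff.symm)
  rw [show q * N + (N - 1) + 1 = (q + 1) * N by rw [add_one_mul]; omega] at hgap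
  refine le_trans ?_ hgap
  gcongr
  linarith

theorem inv_pow_le_valSeq_sub_of_lt (h : LyndonPair N a b) (hr : BinaryPair M r l) (hβ : 1 < β)
    (hval : valSeq β (substSeq N a b (shiftn (M - 1) l)) ≤ 1) {j : ℕ}
    (hagree : ∀ i < j, ω i = ω' i) (hlt : ω j < ω' j) :
    (β ^ ((M + 1) * N * (j + 2)))⁻¹ ≤ valSeq β (substSeq N a b (sparse (M + 1) ω')) -
      valSeq β (substSeq N a b (sparse (M + 1) ω)) := by
  have hM := hr.two_le
  obtain ⟨q, hq⟩ : ∃ q, (M + 1) * (j + 1) = q + 1 :=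
    Nat.exists_eq_succ_of_ne_zero (by positivity)
  have hmod : (q + 1) % (M + 1) = 0 := hq ▸ Nat.mul_mod_right _ _
  have hω : sparse (M + 1) ω (q + 1) = 0 := by
    rw [← hq, sparse_mul_succ M.succ_pos]
    omega
  have hω' : sparse (M + 1) ω' (q + 1) = 1 := by
    rw [← hq, sparse_mul_succ M.succ_pos]
    omega
  have hgap := valSeq_substSeq_add_div_le h hβ (c := sparse (M + 1) ω) (c' := sparse (M + 1) ω')
    (fun i hi => sparse_congr hagree (by omega)) hω hω'
    (valSeq_shiftn_substSeq_sparse_lt_one h hr hβ hval ω _).le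
  have htail := inv_pow_le_valSeq_shiftn_substSeq h hβ (c := sparse (M + 1) ω') (q := q + 1)
    (add_comm 1 (q + 1) ▸ sparse_add_of_mod_eq_zero ω' hmod one_pos (by omega))
    (add_comm 2 (q + 1) ▸ sparse_add_of_mod_eq_zero ω' hmod two_pos (by omega))
  refine le_sub_iff_add_le'.mpr (le_trans (add_le_add_right ?_ _) hgap)
  calc (β ^ ((M + 1) * N * (j + 2)))⁻¹ ≤ (β ^ (N + 1 + (q + 1) * N))⁻¹ := by
        have hN := h.pos
        gcongr
        · exact hβ.le
        · rw [← hq]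
          nlinarith
    _ = (β ^ (N + 1))⁻¹ / β ^ ((q + 1) * N) := by rw [pow_add, mul_inv, div_eq_mul_inv]
    _ ≤ _ := by gcongr

theorem inv_pow_le_abs_valSeq_sub (h : LyndonPair N a b) (hr : BinaryPair M r l) (hβ : 1 < β)
    (hval : valSeq β (substSeq N a b (shiftn (M - 1) l)) ≤ 1) {j : ℕ}
    (hagree : ∀ i < j, ω i = ω' i) (hne : ω j ≠ ω' j) :
    (β ^ ((M + 1) * N * (j + 2)))⁻¹ ≤ |valSeq β (substSeq N a b (sparse (M + 1) ω)) -
      valSeq β (substSeq N a b (sparse (M + 1) ω'))| := by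
  rcases lt_or_gt_of_ne hne with hlt | hgt
  · rw [abs_sub_comm]
    exact (inv_pow_le_valSeq_sub_of_lt h hr hβ hval hagree hlt).trans (le_abs_self _)
  · exact (inv_pow_le_valSeq_sub_of_lt h hr hβ hval (fun i hi => (hagree i hi).symm) hgt).trans
      (le_abs_self _)

end cantor

/-! ### Hausdorff dimension -/

section dimension

variable {X : Type*} [MetricSpace X] {b : ℕ} {v : (ℕ → Fin b) → X} {γ C : ℝ}

theorem injective_of_inv_pow_le_dist (hγ : 0 < γ)
    (hv : ∀ ω ω', ω ≠ ω' → (γ ^ PiNat.firstDiff ω ω')⁻¹ ≤ C * dist (v ω) (v ω')) :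
    Function.Injective v := by
  intro ω ω' heq
  by_contra hne
  have hsep := hv ω ω' hne
  rw [heq, dist_self, mul_zero] at hsep
  exact hsep.not_gt (by positivity)

theorem abs_ofDigits_sub_le_of_inv_pow_le_dist {ρ : ℝ} (hγ : 0 < γ) (hC : 0 ≤ C) (hρ : 0 ≤ ρ)
    (hpow : γ ^ ρ = b)
    (hv : ∀ ω ω', ω ≠ ω' → (γ ^ PiNat.firstDiff ω ω')⁻¹ ≤ C * dist (v ω) (v ω'))
    (ω ω' : ℕ → Fin b) :
    |Real.ofDigits ω - Real.ofDigits ω'| ≤ C ^ ρ * dist (v ω) (v ω') ^ ρ := by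
  rcases eq_or_ne ω ω' with rfl | hne
  · rw [sub_self, abs_zero]
    positivity
  set j := PiNat.firstDiff ω ω'
  calc |Real.ofDigits ω - Real.ofDigits ω'| ≤ ((b : ℝ) ^ j)⁻¹ :=
        Real.abs_ofDigits_sub_ofDigits_le fun _ => PiNat.apply_eq_of_lt_firstDiff
    _ = ((γ ^ j)⁻¹) ^ ρ := by
        rw [Real.inv_rpow (by positivity), ← hpow, ← Real.rpow_pow_comm hγ.le]
    _ ≤ (C * dist (v ω) (v ω')) ^ ρ := by
        gcongr
        exact hv ω ω' hne
    _ = C ^ ρ * dist (v ω) (v ω') ^ ρ := Real.mul_rpow hC dist_nonneg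

theorem one_le_dimH_range_ofDigits (hb : 1 < b) :
    1 ≤ dimH (range (Real.ofDigits (b := b))) := by
  have hIcc : dimH (Icc (0 : ℝ) 1) = 1 := by
    rw [Real.dimH_of_mem_nhds (Icc_mem_nhds (a := 0) (b := 1) (x := 1 / 2) (by norm_num)
      (by norm_num)), Module.finrank_self, Nat.cast_one]
  exact hIcc.ge.trans (dimH_mono (image_univ ▸ Real.ofDigits_SurjOn hb))

theorem dimH_range_pos_of_inv_pow_le_dist (hb : 1 < b) (hγ : 1 < γ) (hC : 0 ≤ C)
    (hv : ∀ ω ω', ω ≠ ω' → (γ ^ PiNat.firstDiff ω ω')⁻¹ ≤ C * dist (v ω) (v ω')) :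
    0 < dimH (range v) := by
  have hγ0 : 0 < γ := one_pos.trans hγ
  have hbR : (1 : ℝ) < b := Nat.one_lt_cast.mpr hb
  have hρ : 0 < Real.logb γ b := Real.logb_pos hγ hbR
  have hpow : γ ^ Real.logb γ b = b := Real.rpow_logb hγ0 hγ.ne' (one_pos.trans hbR)
  lift Real.logb γ b to NNReal using hρ.le with ρ
  lift C to NNReal using hC
  have : Nonempty (ℕ → Fin b) := ⟨fun _ => ⟨0, one_pos.trans hb⟩⟩
  have hinv := Function.leftInverse_invFun (injective_of_inv_pow_le_dist hγ0 hv)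
  -- reading `v ω` as the number with digits `ω` is Hölder continuous with exponent `log b / log γ`
  have hHolder : HolderOnWith (C ^ (ρ : ℝ)) ρ (Real.ofDigits ∘ Function.invFun v) (range v) := by
    rintro _ ⟨ω, rfl⟩ _ ⟨ω', rfl⟩
    have hle := abs_ofDigits_sub_le_of_inv_pow_le_dist hγ0 C.coe_nonneg hρ.le hpow hv ω ω'
    rw [← Real.dist_eq, ← coe_nndist, ← coe_nndist] at hle
    rw [Function.comp_apply, Function.comp_apply, hinv, hinv, edist_nndist, edist_nndist,
      ← ENNReal.coe_rpow_of_nonneg _ ρ.coe_nonneg]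
    exact_mod_cast hle
  have himage : (Real.ofDigits ∘ Function.invFun v) '' range v =
      range (Real.ofDigits (b := b)) := by
    rw [← range_comp, Function.comp_assoc, hinv.comp_eq_id, Function.comp_id]
  have hle := (one_le_dimH_range_ofDigits hb).trans
    (himage ▸ hHolder.dimH_image_le (NNReal.coe_pos.mp hρ))
  refine pos_of_ne_zero fun hzero => ?_
  rw [hzero, ENNReal.zero_div] at hle
  exact one_pos.not_ge hle

end dimension

theorem dimH_survivor_pos {N M : ℕ} {a b r l : ℕ → ℕ} {β : ℝ} (h : LyndonPair N a b)
    (hr : BinaryPair M r l) (hβ : 1 < β) (hb : valSeq β b ≤ 1)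
    (hval : valSeq β (substSeq N a b (shiftn (M - 1) l)) ≤ 1) :
    0 < dimH (survivor β (∑ i ∈ Finset.range N, (a i : ℝ) / β ^ (i + 1) - (β ^ N)⁻¹)) := by
  have hN := h.pos
  set γ := β ^ ((M + 1) * N) with hγ
  have hγ1 : 1 < γ := one_lt_pow₀ hβ (by positivity)
  refine (dimH_range_pos_of_inv_pow_le_dist
    (v := fun ω => valSeq β (substSeq N a b (sparse (M + 1) ω))) (C := γ ^ 2) one_lt_two hγ1
    (by positivity) fun ω ω' hne => ?_).trans_le (dimH_mono ?_)
  · have hsep := inv_pow_le_abs_valSeq_sub h hr hβ hval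
      (fun _ => PiNat.apply_eq_of_lt_firstDiff) (PiNat.apply_firstDiff_ne hne)
    rw [pow_mul, ← hγ, ← Real.dist_eq] at hsep
    calc (γ ^ PiNat.firstDiff ω ω')⁻¹ = γ ^ 2 * (γ ^ (PiNat.firstDiff ω ω' + 2))⁻¹ := by
          rw [pow_add]
          field_simp
      _ ≤ _ := by gcongr
  · exact range_subset_iff.mpr (valSeq_substSeq_sparse_mem_survivor h hr hβ hb hval)

/-! ### The critical value -/

section tau

variable {β t : ℝ}

theorem survivor_antitone (β : ℝ) : Antitone (survivor β) :=
  fun _ _ hle _ hx => ⟨hx.1, fun n => hle.trans (hx.2 n)⟩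

theorem survivor_one (β : ℝ) : survivor β 1 = ∅ :=
  eq_empty_of_forall_notMem fun _ hx => (hx.2 0).not_gt hx.1.2

theorem tau_le (ht : 0 < t) (hdim : dimH (survivor β t) = 0) : tau β ≤ t :=
  csInf_le ⟨0, fun _ hs => hs.1.le⟩ ⟨ht, hdim⟩

theorem le_tau (hdim : 0 < dimH (survivor β t)) : t ≤ tau β := by
  refine le_csInf ⟨1, one_pos, by rw [survivor_one, dimH_empty]⟩ fun s hs => ?_
  by_contra! hlt
  exact (hdim.trans_le (dimH_mono (survivor_antitone β hlt.le))).ne' hs.2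

theorem valWord_eq_sum_perSeq (β : ℝ) (w : List ℕ) :
    valWord β w = ∑ i ∈ Finset.range w.length, (perSeq w i : ℝ) / β ^ (i + 1) :=
  Finset.sum_congr rfl fun _ hi => by rw [perSeq_apply (Finset.mem_range.mp hi)]

variable {w r : List ℕ} {b l : ℕ → ℕ}

theorem valWord_pos (h : LyndonPair w.length (perSeq w) b) (hβ : 0 < β) : 0 < valWord β w := by
  rw [valWord_eq_sum_perSeq]
  refine Finset.sum_pos' (fun i _ => by positivity)
    ⟨w.length - 1, Finset.mem_range.mpr (Nat.sub_lt h.pos one_pos), ?_⟩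
  have := h.last
  positivity

theorem tau_le_valWord (h : LyndonPair w.length (perSeq w) b) (hforces : ForcesEvPer (perSeq w) b)
    (hβ : β ∈ Jint w) : tau β ≤ valWord β w := by
  have hβ1 := one_lt_of_mem_Jint h hβ
  refine tau_le (valWord_pos h (one_pos.trans hβ1)) (Countable.dimH_zero ?_)
  rw [valWord_eq_sum_perSeq]
  exact countable_survivor h hforces hβ1 (valSeq_right_le_one_of_mem_Jint h hβ)
    (one_le_valSeq_of_mem_Jint h hβ)

theorem valWord_sub_le_tau (h : LyndonPair w.length (perSeq w) b)
    (hr : BinaryPair r.length (perSeq r) l) (hβ : β ∈ Jint w) (hβ' : β ∈ Jint (subst w r)) :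
    valWord β w - (β ^ w.length)⁻¹ ≤ tau β := by
  have hren := h.renormalize hr
  rw [← perSeq_subst h hr, ← length_subst (List.ne_nil_of_length_pos h.pos)] at hren
  rw [valWord_eq_sum_perSeq]
  exact le_tau (dimH_survivor_pos h hr (one_lt_of_mem_Jint h hβ)
    (valSeq_right_le_one_of_mem_Jint h hβ) (valSeq_right_le_one_of_mem_Jint hren hβ'))

end tau

/-- Let `β ∈ E_∞` with coding `(s_k)`, i.e. `s₁ ∈ F_e`, `s_k ∈ F` for
`k ≥ 2`, and `β ∈ J^{s₁•…•s_k}` for every `k ≥ 1`.  Then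
`τ(β) = lim_{n→∞} (s₁•…•s_n 0^∞)_β`.  (Here `s` is indexed from `0`.) -/
theorem tau_on_Einf (β : ℝ) (s : ℕ → List ℕ)
    (h1 : s 0 ∈ FareyExt) (h2 : ∀ k : ℕ, 1 ≤ k → s k ∈ FareySet)
    (h3 : ∀ k : ℕ, β ∈ Jint ((List.ofFn fun i : Fin k => s (i + 1)).foldl subst (s 0))) :
    Filter.Tendsto
      (fun n : ℕ => valWord β ((List.ofFn fun i : Fin n => s (i + 1)).foldl subst (s 0)))
      Filter.atTop (𝓝 (tau β)) := by
  change ∀ k, β ∈ Jint (iterSubst s k) at h3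
  have hβ : 1 < β :=
    let ⟨_, hb, _⟩ := exists_lyndonPair_iterSubst h1 h2 0
    one_lt_of_mem_Jint hb (h3 0)
  have hlim : Tendsto (fun n : ℕ => tau β + β⁻¹ ^ n) atTop (𝓝 (tau β)) := by
    simpa using (tendsto_pow_atTop_nhds_zero_of_lt_one (inv_nonneg.mpr (zero_le_one.trans hβ.le))
      (inv_lt_one_of_one_lt₀ hβ)).const_add (tau β)
  refine tendsto_of_tendsto_of_tendsto_of_le_of_le tendsto_const_nhds hlim (fun n => ?_)
    fun n => ?_
  all_goals obtain ⟨b, hb, hforces⟩ := exists_lyndonPair_iterSubst h1 h2 n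
  · exact tau_le_valWord hb hforces (h3 n)
  · have hlow := valWord_sub_le_tau hb (binaryPair_of_mem_FareySet (h2 (n + 1) n.succ_pos)) (h3 n)
      (iterSubst_succ s n ▸ h3 (n + 1))
    have hpow : (β ^ (iterSubst s n).length)⁻¹ ≤ β⁻¹ ^ n := by
      rw [inv_pow]
      exact inv_anti₀ (by positivity) (pow_le_pow_right₀ hβ.le (le_length_iterSubst h1 h2 n))
    exact (sub_le_iff_le_add.mp hlow).trans (by gcongr)
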